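/- Let S be a quasi-hereditary algebra with Ringel dual S'. Then gfd(S) = wfd(S') and wfd(S) = gfd(S'). -/

import Mathlib

/-!
Common definitions for formalizing "On the global and ∇-filtration dimensions of
quasi-hereditary algebras" by Erdmann and Parker.

We work with a finite-dimensional algebra `S` over a field `k`; since `S` is
finite dimensional over `k`, the finite-dimensional `S`-modules are exactly the
finitely generated ones, so we express finite-dimensionality of a module `M` as
`Module.Finite S M`.
-/

open CategoryTheory

namespace QHPaper

variable (S : Type) [Ring S]

/-- The subquotient `B ⧸ A` associated to two submodules `A B` of `M`. -/
abbrev subquot {M : ModuleCat.{0} S} (A B : Submodule S ↥M) : Type :=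
  ↥B ⧸ (Submodule.comap B.subtype A)

/-- A filtration `⊥ = f 0 ≤ f 1 ≤ ⋯ ≤ f n = ⊤` of `M` whose `i`-th section
`f (i+1) / f i` is isomorphic to the prescribed module `D i`. -/
def HasFiltrationWithSections (M : ModuleCat.{0} S) (n : ℕ)
    (f : Fin (n + 1) → Submodule S ↥M) (D : Fin n → ModuleCat.{0} S) : Prop :=
  Monotone f ∧ f 0 = ⊥ ∧ f (Fin.last n) = ⊤ ∧
    ∀ i : Fin n, Nonempty ((subquot S (f i.castSucc) (f i.succ)) ≃ₗ[S] ↥(D i))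

/-- `L` occurs as a (simple) subquotient of `M`; for `L` simple this says that `L`
is a composition factor of `M`. -/
def IsCompFactor (L M : ModuleCat.{0} S) : Prop :=
  ∃ (A B : Submodule S ↥M), A ≤ B ∧ Nonempty ((subquot S A B) ≃ₗ[S] ↥L)

/-- `L` occurs with multiplicity `m` among the sections of a composition series of `M`. -/
def CompFactorMult (L M : ModuleCat.{0} S) (m : ℕ) : Prop :=
  ∃ (n : ℕ) (f : Fin (n + 1) → Submodule S ↥M),
    Monotone f ∧ f 0 = ⊥ ∧ f (Fin.last n) = ⊤ ∧
    (∀ i : Fin n, IsSimpleModule S (subquot S (f i.castSucc) (f i.succ))) ∧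
    Nat.card {i : Fin n // Nonempty ((subquot S (f i.castSucc) (f i.succ)) ≃ₗ[S] ↥L)} = m

/-- `P` is a projective cover of `M`: `P` is projective and there is a surjection
`P → M` whose kernel is superfluous in `P`. -/
def IsProjCover (P M : ModuleCat.{0} S) : Prop :=
  Module.Projective S ↥P ∧ ∃ π : ↥P →ₗ[S] ↥M, Function.Surjective π ∧
    ∀ N : Submodule S ↥P, N ⊔ LinearMap.ker π = ⊤ → N = ⊤

/-- `I` is an injective hull of `M`: `I` is injective and there is an injection
`M → I` with essential image. -/
def IsInjHull (I M : ModuleCat.{0} S) : Prop :=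
  Module.Injective S ↥I ∧ ∃ ι : ↥M →ₗ[S] ↥I, Function.Injective ι ∧
    ∀ N : Submodule S ↥I, N ⊓ LinearMap.range ι = ⊥ → N = ⊥

/-- The data of a quasi-hereditary algebra structure on `S` with weight poset `Λ`:
a full set `L` of pairwise non-isomorphic simple modules, their projective covers `P`
and injective hulls `I`, the standard modules `std` (largest quotient of `P lam` with
all composition factors `L mu`, `mu ≤ lam`), the costandard modules `costd`
(largest submodule of `I lam` with all composition factors `L mu`, `mu ≤ lam`),
such that `L lam` occurs exactly once in `std lam` and `P lam` is filtered by
standard modules `std mu` with `mu ≥ lam`, with `std lam` occurring exactly once. -/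
structure QHData (Λ : Type) [Fintype Λ] [PartialOrder Λ] where
  L : Λ → ModuleCat.{0} S
  P : Λ → ModuleCat.{0} S
  I : Λ → ModuleCat.{0} S
  std : Λ → ModuleCat.{0} S
  costd : Λ → ModuleCat.{0} S
  finiteL : ∀ lam, Module.Finite S ↥(L lam)
  simpleL : ∀ lam, IsSimpleModule S ↥(L lam)
  nonisoL : ∀ lam mu, lam ≠ mu → IsEmpty (↥(L lam) ≃ₗ[S] ↥(L mu))
  fullL : ∀ M : ModuleCat.{0} S, IsSimpleModule S ↥M → ∃ lam, Nonempty (↥M ≃ₗ[S] ↥(L lam))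
  projCover : ∀ lam, IsProjCover S (P lam) (L lam)
  injHull : ∀ lam, IsInjHull S (I lam) (L lam)
  stdSpec : ∀ lam, ∃ K : Submodule S ↥(P lam),
    Nonempty (↥(std lam) ≃ₗ[S] (↥(P lam) ⧸ K)) ∧
    (∀ mu, IsCompFactor S (L mu) (ModuleCat.of S (↥(P lam) ⧸ K)) → mu ≤ lam) ∧
    ∀ K' : Submodule S ↥(P lam),
      (∀ mu, IsCompFactor S (L mu) (ModuleCat.of S (↥(P lam) ⧸ K')) → mu ≤ lam) → K ≤ K'
  costdSpec : ∀ lam, ∃ V : Submodule S ↥(I lam),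
    Nonempty (↥(costd lam) ≃ₗ[S] ↥V) ∧
    (∀ mu, IsCompFactor S (L mu) (ModuleCat.of S ↥V) → mu ≤ lam) ∧
    ∀ V' : Submodule S ↥(I lam),
      (∀ mu, IsCompFactor S (L mu) (ModuleCat.of S ↥V') → mu ≤ lam) → V' ≤ V
  multOne : ∀ lam, CompFactorMult S (L lam) (std lam) 1
  projFilt : ∀ lam, ∃ (n : ℕ) (f : Fin (n + 1) → Submodule S ↥(P lam)) (g : Fin n → Λ),
    HasFiltrationWithSections S (P lam) n f (fun i => std (g i)) ∧
    (∀ i, lam ≤ g i) ∧ Nat.card {i : Fin n // g i = lam} = 1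

variable {Λ : Type} [Fintype Λ] [PartialOrder Λ]

/-- `M` has a filtration with costandard sections, i.e. `M ∈ F(∇)`. -/
def InCostdFilt (Q : QHData S Λ) (M : ModuleCat.{0} S) : Prop :=
  ∃ (n : ℕ) (f : Fin (n + 1) → Submodule S ↥M) (g : Fin n → Λ),
    HasFiltrationWithSections S M n f (fun i => Q.costd (g i))

/-- `M` has a filtration with standard sections, i.e. `M ∈ F(Δ)`. -/
def InStdFilt (Q : QHData S Λ) (M : ModuleCat.{0} S) : Prop :=
  ∃ (n : ℕ) (f : Fin (n + 1) → Submodule S ↥M) (g : Fin n → Λ),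
    HasFiltrationWithSections S M n f (fun i => Q.std (g i))

/-- `0 → N 0 → N 1 → ⋯ → N (n+1) → 0` is exact. -/
def IsExactSeq (n : ℕ) (N : Fin (n + 2) → ModuleCat.{0} S)
    (f : ∀ i : Fin (n + 1), ↥(N i.castSucc) →ₗ[S] ↥(N i.succ)) : Prop :=
  Function.Injective (f 0) ∧ Function.Surjective (f (Fin.last n)) ∧
    ∀ i : Fin n, LinearMap.range (f i.castSucc) = LinearMap.ker (f i.succ)

/-- `M` has a ∇-resolution (co-resolution by modules in `F(∇)`) of length `d`:
`0 → M → M₀ → ⋯ → M_d → 0` with each `Mᵢ ∈ F(∇)`. -/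
def GfdLE (Q : QHData S Λ) (M : ModuleCat.{0} S) (d : ℕ) : Prop :=
  ∃ (N : Fin (d + 2) → ModuleCat.{0} S)
    (f : ∀ i : Fin (d + 1), ↥(N i.castSucc) →ₗ[S] ↥(N i.succ)),
    IsExactSeq S d N f ∧ N 0 = M ∧ ∀ i : Fin (d + 1), InCostdFilt S Q (N i.succ)

/-- The ∇-filtration dimension (good filtration dimension) of a module. -/
noncomputable def gfd (Q : QHData S Λ) (M : ModuleCat.{0} S) : ℕ :=
  sInf {d | GfdLE S Q M d}

/-- `M` has a resolution `0 → M_d → ⋯ → M₀ → M → 0` with each `Mᵢ ∈ F(Δ)`. -/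
def WfdLE (Q : QHData S Λ) (M : ModuleCat.{0} S) (d : ℕ) : Prop :=
  ∃ (N : Fin (d + 2) → ModuleCat.{0} S)
    (f : ∀ i : Fin (d + 1), ↥(N i.castSucc) →ₗ[S] ↥(N i.succ)),
    IsExactSeq S d N f ∧ N (Fin.last (d + 1)) = M ∧
    ∀ i : Fin (d + 1), InStdFilt S Q (N i.castSucc)

/-- The Δ-filtration dimension of a module. -/
noncomputable def wfd (Q : QHData S Λ) (M : ModuleCat.{0} S) : ℕ :=
  sInf {d | WfdLE S Q M d}

/-- `M` has a projective resolution of length `d`. -/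
def ProjdimLE (M : ModuleCat.{0} S) (d : ℕ) : Prop :=
  ∃ (N : Fin (d + 2) → ModuleCat.{0} S)
    (f : ∀ i : Fin (d + 1), ↥(N i.castSucc) →ₗ[S] ↥(N i.succ)),
    IsExactSeq S d N f ∧ N (Fin.last (d + 1)) = M ∧
    ∀ i : Fin (d + 1), Module.Projective S ↥(N i.castSucc)

/-- The projective dimension of a module. -/
noncomputable def projdim (M : ModuleCat.{0} S) : ℕ :=
  sInf {d | ProjdimLE S M d}

/-- `M` has an injective resolution of length `d`. -/
def InjdimLE (M : ModuleCat.{0} S) (d : ℕ) : Prop :=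
  ∃ (N : Fin (d + 2) → ModuleCat.{0} S)
    (f : ∀ i : Fin (d + 1), ↥(N i.castSucc) →ₗ[S] ↥(N i.succ)),
    IsExactSeq S d N f ∧ N 0 = M ∧
    ∀ i : Fin (d + 1), Module.Injective S ↥(N i.succ)

/-- The injective dimension of a module. -/
noncomputable def injdim (M : ModuleCat.{0} S) : ℕ :=
  sInf {d | InjdimLE S M d}

/-- `gfd(S)`: the supremum of the ∇-filtration dimensions of all
finite-dimensional `S`-modules. -/
noncomputable def gfdAlg (Q : QHData S Λ) : ℕ :=
  sSup {d | ∃ M : ModuleCat.{0} S, Module.Finite S ↥M ∧ gfd S Q M = d}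

/-- `wfd(S)`: the supremum of the Δ-filtration dimensions of all
finite-dimensional `S`-modules. -/
noncomputable def wfdAlg (Q : QHData S Λ) : ℕ :=
  sSup {d | ∃ M : ModuleCat.{0} S, Module.Finite S ↥M ∧ wfd S Q M = d}

/-- The global dimension of `S`: the supremum of the projective dimensions of all
finite-dimensional `S`-modules. -/
noncomputable def globdim : ℕ :=
  sSup {d | ∃ M : ModuleCat.{0} S, Module.Finite S ↥M ∧ projdim S M = d}

/-- `Ext^n_S(A, B) ≠ 0`. -/
noncomputable def extNe (A B : ModuleCat.{0} S) (n : ℕ) : Prop :=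
  Nontrivial ↥(((Ext ℤ (ModuleCat.{0} S) n).obj (Opposite.op A)).obj B)

/-- A simple-preserving duality on `S`: a contravariant, exact, fully faithful,
additive self-functor `D` on the category of finite-dimensional `S`-modules with
`D (D M) ≅ M` and `D (L lam) ≅ L lam` for all `lam`. -/
structure Duality (Q : QHData S Λ) where
  D : ModuleCat.{0} S → ModuleCat.{0} S
  Dmap : ∀ {A B : ModuleCat.{0} S}, (↥A →ₗ[S] ↥B) → (↥(D B) →ₗ[S] ↥(D A))
  finD : ∀ M : ModuleCat.{0} S, Module.Finite S ↥M → Module.Finite S ↥(D M)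
  Did : ∀ A : ModuleCat.{0} S, Module.Finite S ↥A →
    Dmap (LinearMap.id : ↥A →ₗ[S] ↥A) = LinearMap.id
  Dcomp : ∀ {A B C : ModuleCat.{0} S}, Module.Finite S ↥A → Module.Finite S ↥B →
    Module.Finite S ↥C → ∀ (f : ↥A →ₗ[S] ↥B) (g : ↥B →ₗ[S] ↥C),
      Dmap (g ∘ₗ f) = Dmap f ∘ₗ Dmap g
  Dadd : ∀ {A B : ModuleCat.{0} S}, Module.Finite S ↥A → Module.Finite S ↥B →
    ∀ (f g : ↥A →ₗ[S] ↥B), Dmap (f + g) = Dmap f + Dmap g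
  Dfull : ∀ {A B : ModuleCat.{0} S}, Module.Finite S ↥A → Module.Finite S ↥B →
    Function.Bijective (fun f : ↥A →ₗ[S] ↥B => Dmap f)
  Dexact : ∀ {A B C : ModuleCat.{0} S}, Module.Finite S ↥A → Module.Finite S ↥B →
    Module.Finite S ↥C → ∀ (f : ↥A →ₗ[S] ↥B) (g : ↥B →ₗ[S] ↥C),
      Function.Injective f → Function.Surjective g →
      LinearMap.range f = LinearMap.ker g →
      Function.Injective (Dmap g) ∧ Function.Surjective (Dmap f) ∧
        LinearMap.range (Dmap g) = LinearMap.ker (Dmap f)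
  Dinvol : ∀ M : ModuleCat.{0} S, Module.Finite S ↥M → Nonempty (↥(D (D M)) ≃ₗ[S] ↥M)
  DL : ∀ lam, Nonempty (↥(D (Q.L lam)) ≃ₗ[S] ↥(Q.L lam))

/-- Strong property A: `mu < lam` implies `gfd (L mu) < gfd (L lam)`. -/
def StrongPropA (Q : QHData S Λ) : Prop :=
  ∀ mu lam : Λ, mu < lam → gfd S Q (Q.L mu) < gfd S Q (Q.L lam)

/-- Property A: `mu < lam` implies `gfd (L mu) ≤ gfd (L lam)`. -/
def PropA (Q : QHData S Λ) : Prop :=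
  ∀ mu lam : Λ, mu < lam → gfd S Q (Q.L mu) ≤ gfd S Q (Q.L lam)

/-- Property B: `mu < lam` implies `wfd (∇ mu) ≤ wfd (∇ lam)`. -/
def PropB (Q : QHData S Λ) : Prop :=
  ∀ mu lam : Λ, mu < lam → wfd S Q (Q.costd mu) ≤ wfd S Q (Q.costd lam)

/-- Property C: `wfd (∇ lam) = gfd S - inj (∇ lam)` for all `lam`. -/
def PropC (Q : QHData S Λ) : Prop :=
  ∀ lam : Λ, wfd S Q (Q.costd lam) = gfdAlg S Q - injdim S (Q.costd lam)

/-- Property D: `wfd (∇ lam) = wfd (L lam)` for all `lam`. -/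
def PropD (Q : QHData S Λ) : Prop :=
  ∀ lam : Λ, wfd S Q (Q.costd lam) = wfd S Q (Q.L lam)

/-- Property E: `mu < lam` implies `inj (∇ mu) ≥ inj (∇ lam)`. -/
def PropE (Q : QHData S Λ) : Prop :=
  ∀ mu lam : Λ, mu < lam → injdim S (Q.costd lam) ≤ injdim S (Q.costd mu)

/-- The partial order is minimal for the quasi-hereditary structure: whenever
`mu < lam` are adjacent, `L mu` is a composition factor of `Δ lam` or of `∇ lam`. -/
def MinimalOrder (Q : QHData S Λ) : Prop :=
  ∀ mu lam : Λ, mu < lam → (¬ ∃ nu, mu < nu ∧ nu < lam) →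
    IsCompFactor S (Q.L mu) (Q.std lam) ∨ IsCompFactor S (Q.L mu) (Q.costd lam)

/-- `S` is connected (indecomposable as an algebra, i.e. one block): the only
central idempotents are `0` and `1`. -/
def ConnectedRing : Prop :=
  ∀ c : S, c * c = c → (∀ s : S, c * s = s * c) → c = 0 ∨ c = 1

/-- A tilting module: a module in `F(Δ) ∩ F(∇)`. -/
def IsTilting (Q : QHData S Λ) (T : ModuleCat.{0} S) : Prop :=
  InStdFilt S Q T ∧ InCostdFilt S Q T

/-- The indecomposable tilting module `T(lam)`: an indecomposable tilting module in
which `L lam` occurs exactly once and all other composition factors `L mu` have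
`mu < lam`. -/
def IsIndecTilting (Q : QHData S Λ) (lam : Λ) (T : ModuleCat.{0} S) : Prop :=
  IsTilting S Q T ∧ Nontrivial ↥T ∧
    (∀ A B : Submodule S ↥T, IsCompl A B → A = ⊥ ∨ B = ⊥) ∧
    CompFactorMult S (Q.L lam) T 1 ∧
    ∀ mu, IsCompFactor S (Q.L mu) T → mu = lam ∨ mu < lam

/-- A full tilting module: a (finite-dimensional) tilting module having every
indecomposable tilting module as a direct summand. -/
def IsFullTilting (Q : QHData S Λ) (T : ModuleCat.{0} S) : Prop :=
  IsTilting S Q T ∧ Module.Finite S ↥T ∧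
    ∀ (lam : Λ) (Tl : ModuleCat.{0} S), IsIndecTilting S Q lam Tl →
      ∃ Cc : ModuleCat.{0} S, Nonempty (↥T ≃ₗ[S] (↥Tl × ↥Cc))

/-- The Ringel dual ring `S' = End_S(T)^op`. -/
abbrev RingelDualRing (T : ModuleCat.{0} S) : Type := (Module.End S ↥T)ᵐᵒᵖ

/-- `Hom_S(T, X)` is a module over `S' = End_S(T)^op` via `f • φ = φ ∘ f`. -/
instance homTModule (T X : ModuleCat.{0} S) :
    Module (RingelDualRing S T) (↥T →ₗ[S] ↥X) where
  smul a φ := φ ∘ₗ a.unop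
  one_smul φ := rfl
  mul_smul a b φ := rfl
  smul_zero a := rfl
  smul_add a φ ψ := rfl
  add_smul a b φ := by
    ext x
    show φ ((a.unop + b.unop) x) = φ (a.unop x) + φ (b.unop x)
    rw [LinearMap.add_apply, map_add]
  zero_smul φ := by
    ext x
    show φ ((0 : Module.End S ↥T) x) = 0
    rw [LinearMap.zero_apply, map_zero]

/-- The `S'`-module `Hom_S(T, X)`, i.e. the image of `X` under the functor
`F = Hom_S(T, -)`. -/
noncomputable def homTMod (T X : ModuleCat.{0} S) :
    ModuleCat.{0} (RingelDualRing S T) :=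
  ModuleCat.of (RingelDualRing S T) (↥T →ₗ[S] ↥X)

/-- `Q'` is a Ringel dual quasi-hereditary structure for `(Q, T)`:
`T` is a full tilting module, `Q'` is a quasi-hereditary structure on
`S' = End_S(T)^op` for the opposite poset, and its standard modules are
`Δ'(lam) = Hom_S(T, ∇(lam))`. -/
def IsRingelDualData (Q : QHData S Λ) (T : ModuleCat.{0} S)
    (Q' : QHData (RingelDualRing S T) Λᵒᵈ) : Prop :=
  IsFullTilting S Q T ∧
    ∀ lam : Λ, Nonempty
      (↥(Q'.std (OrderDual.toDual lam)) ≃ₗ[RingelDualRing S T]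
        (↥T →ₗ[S] ↥(Q.costd lam)))

/-- `0 → T_d → ⋯ → T_0 → M → 0` exact with all `T_i` tilting modules. -/
def TiltResLE (Q : QHData S Λ) (M : ModuleCat.{0} S) (d : ℕ) : Prop :=
  ∃ (N : Fin (d + 2) → ModuleCat.{0} S)
    (f : ∀ i : Fin (d + 1), ↥(N i.castSucc) →ₗ[S] ↥(N i.succ)),
    IsExactSeq S d N f ∧ N (Fin.last (d + 1)) = M ∧
    ∀ i : Fin (d + 1), IsTilting S Q (N i.castSucc)

/-- An idempotent `e` is primitive if it is nonzero and is not the sum of two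
nonzero orthogonal idempotents. -/
def IsPrimitiveIdempotent (e : S) : Prop :=
  e * e = e ∧ e ≠ 0 ∧ ∀ a b : S, a * a = a → b * b = b → a * b = 0 → b * a = 0 →
    e = a + b → a = 0 ∨ b = 0

/-- The additive subgroup `e•M = {m | e • m = m}` of `M` (for `e` idempotent). -/
def cornerSet (eG : S) (M : ModuleCat.{0} S) : AddSubgroup ↥M where
  carrier := {m | eG • m = m}
  add_mem' := by
    intro a b ha hb
    simp only [Set.mem_setOf_eq] at *
    rw [smul_add, ha, hb]
  zero_mem' := by
    simp only [Set.mem_setOf_eq]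
    rw [smul_zero]
  neg_mem' := by
    intro a ha
    simp only [Set.mem_setOf_eq] at *
    rw [smul_neg, ha]

/-- The `R`-module structure on `e•M`, where `ι : R → S` identifies `R` with the
corner ring `eSe` (as a non-unital ring, with `ι 1 = e`). -/
def cornerModuleStructure (R : Type) [Ring R] (ι : R →ₙ+* S) (eG : S)
    (hone : ι 1 = eG) (hrange : ∀ r : R, eG * ι r * eG = ι r)
    (M : ModuleCat.{0} S) : Module R ↥(cornerSet S eG M) where
  smul r m := ⟨ι r • (m : ↥M), by
    have hm : eG • (m : ↥M) = (m : ↥M) := m.2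
    show eG • (ι r • (m : ↥M)) = ι r • (m : ↥M)
    have h : eG • (ι r • (m : ↥M)) = (eG * ι r * eG) • (m : ↥M) := by
      rw [mul_assoc, mul_smul, mul_smul, hm]
    rw [h, hrange]⟩
  one_smul m := by
    apply Subtype.ext
    show ι 1 • (m : ↥M) = (m : ↥M)
    rw [hone]
    exact m.2
  mul_smul r s m := by
    apply Subtype.ext
    show ι (r * s) • (m : ↥M) = ι r • (ι s • (m : ↥M))
    rw [map_mul, mul_smul]
  smul_zero r := by
    apply Subtype.ext
    show ι r • (0 : ↥M) = 0
    rw [smul_zero]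
  smul_add r m n := by
    apply Subtype.ext
    show ι r • ((m : ↥M) + (n : ↥M)) = ι r • (m : ↥M) + ι r • (n : ↥M)
    rw [smul_add]
  add_smul r s m := by
    apply Subtype.ext
    show ι (r + s) • (m : ↥M) = ι r • (m : ↥M) + ι s • (m : ↥M)
    rw [map_add, add_smul]
  zero_smul m := by
    apply Subtype.ext
    show ι 0 • (m : ↥M) = 0
    rw [map_zero, zero_smul]

/-- The `R`-module `e•M`, where `R ≅ eSe` via `ι`. -/
noncomputable def cornerMod (R : Type) [Ring R] (ι : R →ₙ+* S) (eG : S)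
    (hone : ι 1 = eG) (hrange : ∀ r : R, eG * ι r * eG = ι r)
    (M : ModuleCat.{0} S) : ModuleCat.{0} R :=
  @ModuleCat.of R _ ↥(cornerSet S eG M) _
    (cornerModuleStructure S R ι eG hone hrange M)

end QHPaper


namespace QHProof

set_option linter.style.haveILetI false

open QHPaper

/-! ### Short exact sequences and vanishing of Ext groups -/

section ExtBasics

variable {R : Type} [Ring R]
variable {A B C X Y : Type} [AddCommGroup A] [Module R A] [AddCommGroup B] [Module R B]
  [AddCommGroup C] [Module R C] [AddCommGroup X] [Module R X] [AddCommGroup Y] [Module R Y]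

/-- short exact sequence of modules -/
structure SES (f : A →ₗ[R] B) (g : B →ₗ[R] C) : Prop where
  inj : Function.Injective f
  surj : Function.Surjective g
  exact : Function.Exact f g

theorem SES.of_sub (N : Submodule R B) : SES N.subtype N.mkQ :=
  ⟨N.injective_subtype, N.mkQ_surjective, by
    rw [LinearMap.exact_iff]; simp⟩

theorem SES.of_surj (g : B →ₗ[R] C) (hg : Function.Surjective g) :
    SES (LinearMap.ker g).subtype g :=
  ⟨Submodule.injective_subtype _, hg, by rw [LinearMap.exact_iff]; simp⟩

theorem SES.of_inj (f : A →ₗ[R] B) (hf : Function.Injective f) :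
    SES f (LinearMap.range f).mkQ :=
  ⟨hf, Submodule.mkQ_surjective _, by rw [LinearMap.exact_iff]; simp⟩

variable (R) in
/-- vanishing of `Ext^n_R(X,Y)` -/
def EV (X Y : Type) [AddCommGroup X] [Module R X] [AddCommGroup Y] [Module R Y] (n : ℕ) : Prop :=
  Subsingleton (Abelian.Ext (ModuleCat.of R X) (ModuleCat.of R Y) n)

theorem ev_iff {n : ℕ} : EV R X Y n ↔
    ∀ e : Abelian.Ext (ModuleCat.of R X) (ModuleCat.of R Y) n, e = 0 :=
  ⟨fun h e => h.elim e 0, fun h => ⟨fun a b => (h a).trans (h b).symm⟩⟩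

theorem SES.se {f : A →ₗ[R] B} {g : B →ₗ[R] C} (h : SES f g) :
    (ShortComplex.mk (ModuleCat.ofHom f) (ModuleCat.ofHom g) (by
      rw [← ModuleCat.ofHom_comp, h.exact.linearMap_comp_eq_zero]; rfl)).ShortExact where
  exact := by
    rw [ShortComplex.ShortExact.moduleCat_exact_iff_function_exact]
    exact h.exact
  mono_f := (ModuleCat.mono_iff_injective _).2 h.inj
  epi_g := (ModuleCat.epi_iff_surjective _).2 h.surj

open Abelian

theorem EV.cov1 {f : A →ₗ[R] B} {g : B →ₗ[R] C} (h : SES f g) {n : ℕ}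
    (h3 : EV R X C n) (h2 : EV R X B (n+1)) : EV R X A (n+1) := by
  rw [ev_iff] at *
  intro e
  obtain ⟨x, hx⟩ := Ext.covariant_sequence_exact₁ (ModuleCat.of R X) h.se e (h2 _) rfl
  rw [← hx, h3 x, Ext.zero_comp]

theorem EV.cov2 {f : A →ₗ[R] B} {g : B →ₗ[R] C} (h : SES f g) {n : ℕ}
    (h1 : EV R X A n) (h3 : EV R X C n) : EV R X B n := by
  rw [ev_iff] at *
  intro e
  obtain ⟨x, hx⟩ := Ext.covariant_sequence_exact₂ (ModuleCat.of R X) h.se e (h3 _)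
  rw [← hx, h1 x, Ext.zero_comp]

theorem EV.cov3 {f : A →ₗ[R] B} {g : B →ₗ[R] C} (h : SES f g) {n : ℕ}
    (h2 : EV R X B n) (h1 : EV R X A (n+1)) : EV R X C n := by
  rw [ev_iff] at *
  intro e
  obtain ⟨x, hx⟩ := Ext.covariant_sequence_exact₃ (ModuleCat.of R X) h.se e rfl (h1 _)
  rw [← hx, h2 x, Ext.zero_comp]

theorem EV.con1 {f : A →ₗ[R] B} {g : B →ₗ[R] C} (h : SES f g) {n : ℕ}
    (h2 : EV R B Y n) (h3 : EV R C Y (n+1)) : EV R A Y n := by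
  rw [ev_iff] at *
  intro e
  obtain ⟨x, hx⟩ := Ext.contravariant_sequence_exact₁ h.se (ModuleCat.of R Y) e
    (add_comm 1 n) (h3 _)
  rw [← hx, h2 x, Ext.comp_zero]

theorem EV.con2 {f : A →ₗ[R] B} {g : B →ₗ[R] C} (h : SES f g) {n : ℕ}
    (h1 : EV R A Y n) (h3 : EV R C Y n) : EV R B Y n := by
  rw [ev_iff] at *
  intro e
  obtain ⟨x, hx⟩ := Ext.contravariant_sequence_exact₂ h.se (ModuleCat.of R Y) e (h1 _)
  rw [← hx, h3 x, Ext.comp_zero]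

theorem EV.con3 {f : A →ₗ[R] B} {g : B →ₗ[R] C} (h : SES f g) {n : ℕ}
    (h1 : EV R A Y n) (h2 : EV R B Y (n+1)) : EV R C Y (n+1) := by
  rw [ev_iff] at *
  intro e
  obtain ⟨x, hx⟩ := Ext.contravariant_sequence_exact₃ h.se (ModuleCat.of R Y) e (h2 _)
    (add_comm 1 n)
  rw [← hx, h1 x, Ext.comp_zero]

theorem EV.proj [Module.Projective R X] (n : ℕ) : EV R X Y (n+1) := by
  have : Projective (ModuleCat.of R X) := (IsProjective.iff_projective X).1 inferInstance
  rw [ev_iff]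
  intro e
  exact Ext.eq_zero_of_projective e

theorem EV.inj [Module.Injective R Y] (n : ℕ) : EV R X Y (n+1) := by
  have : Injective (ModuleCat.of R Y) := Module.injective_object_of_injective_module R Y
  rw [ev_iff]
  intro e
  exact Ext.eq_zero_of_injective e

theorem EV.retract_right {i : A →ₗ[R] B} {r : B →ₗ[R] A} (h : r ∘ₗ i = LinearMap.id) {n : ℕ}
    (hB : EV R X B n) : EV R X A n := by
  rw [ev_iff] at *
  intro e
  have h1 : ModuleCat.ofHom i ≫ ModuleCat.ofHom r = 𝟙 (ModuleCat.of R A) := by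
    rw [← ModuleCat.ofHom_comp, h]; rfl
  have := Ext.comp_mk₀_id e
  rw [← this, ← h1, ← Ext.mk₀_comp_mk₀, ← Ext.comp_assoc_of_third_deg_zero, hB (e.comp _ _),
    Ext.zero_comp]

theorem EV.retract_left {i : A →ₗ[R] B} {r : B →ₗ[R] A} (h : r ∘ₗ i = LinearMap.id) {n : ℕ}
    (hB : EV R B Y n) : EV R A Y n := by
  rw [ev_iff] at *
  intro e
  have h1 : ModuleCat.ofHom i ≫ ModuleCat.ofHom r = 𝟙 (ModuleCat.of R A) := by
    rw [← ModuleCat.ofHom_comp, h]; rfl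
  have := Ext.mk₀_id_comp e
  rw [← this, ← h1, ← Ext.mk₀_comp_mk₀_assoc, hB (Ext.comp _ e _), Ext.comp_zero]

theorem EV.congr_right (e : A ≃ₗ[R] B) {n : ℕ} (hB : EV R X B n) : EV R X A n :=
  hB.retract_right (i := e.toLinearMap) (r := e.symm.toLinearMap) (by ext; simp)

theorem EV.congr_left (e : A ≃ₗ[R] B) {n : ℕ} (hB : EV R B Y n) : EV R A Y n :=
  hB.retract_left (i := e.toLinearMap) (r := e.symm.toLinearMap) (by ext; simp)

theorem EV.subsing_right [Subsingleton Y] (n : ℕ) : EV R X Y n := by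
  rw [ev_iff]
  intro e
  have h1 : 𝟙 (ModuleCat.of R Y) = 0 := by
    ext x; exact Subsingleton.elim (α := Y) _ _
  rw [← Ext.comp_mk₀_id e, h1, Ext.mk₀_zero, Ext.comp_zero]

theorem EV.subsing_left [Subsingleton X] (n : ℕ) : EV R X Y n := by
  rw [ev_iff]
  intro e
  have h1 : 𝟙 (ModuleCat.of R X) = 0 := by
    ext x; exact Subsingleton.elim (α := X) _ _
  rw [← Ext.mk₀_id_comp e, h1, Ext.mk₀_zero, Ext.zero_comp]

theorem EV.lift {f : A →ₗ[R] B} {g : B →ₗ[R] C} (h : SES f g)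
    (h1 : EV R X A 1) (u : X →ₗ[R] C) : ∃ v : X →ₗ[R] B, g ∘ₗ v = u := by
  rw [ev_iff] at *
  obtain ⟨x, hx⟩ := Ext.covariant_sequence_exact₃ (ModuleCat.of R X) h.se
    (Ext.mk₀ (ModuleCat.ofHom u)) rfl (h1 _)
  obtain ⟨v, rfl⟩ := Ext.mk₀_bijective _ _ |>.2 x
  refine ⟨v.hom, ?_⟩
  rw [Ext.mk₀_comp_mk₀] at hx
  have := (Ext.mk₀_bijective _ _).1 hx
  exact congrArg ModuleCat.Hom.hom this

theorem EV.extend {f : A →ₗ[R] B} {g : B →ₗ[R] C} (h : SES f g)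
    (h1 : EV R C Y 1) (u : A →ₗ[R] Y) : ∃ v : B →ₗ[R] Y, v ∘ₗ f = u := by
  rw [ev_iff] at *
  obtain ⟨x, hx⟩ := Ext.contravariant_sequence_exact₁ h.se (ModuleCat.of R Y)
    (Ext.mk₀ (ModuleCat.ofHom u)) rfl (h1 _)
  obtain ⟨v, rfl⟩ := Ext.mk₀_bijective _ _ |>.2 x
  refine ⟨v.hom, ?_⟩
  rw [Ext.mk₀_comp_mk₀] at hx
  have := (Ext.mk₀_bijective _ _).1 hx
  exact congrArg ModuleCat.Hom.hom this

theorem EV.of_lift {f : A →ₗ[R] B} {g : B →ₗ[R] C} (h : SES f g) (h2 : EV R X B 1)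
    (hl : ∀ u : X →ₗ[R] C, ∃ v : X →ₗ[R] B, g ∘ₗ v = u) : EV R X A 1 := by
  rw [ev_iff] at *
  intro e
  obtain ⟨x, hx⟩ := Ext.covariant_sequence_exact₁ (ModuleCat.of R X) h.se e (h2 _) rfl
  obtain ⟨u, rfl⟩ := Ext.mk₀_bijective _ _ |>.2 x
  obtain ⟨v, hv⟩ := hl u.hom
  have hu : u = ModuleCat.ofHom v ≫ ModuleCat.ofHom g :=
    ModuleCat.hom_ext hv.symm
  have := h.se.comp_extClass
  dsimp at this
  rw [← hx, hu, ← Ext.mk₀_comp_mk₀_assoc]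
  refine (congrArg (fun z => (Ext.mk₀ (ModuleCat.ofHom v)).comp z _) this).trans ?_
  rw [Ext.comp_zero]

theorem EV.of_extend {f : A →ₗ[R] B} {g : B →ₗ[R] C} (h : SES f g) (h2 : EV R B Y 1)
    (hl : ∀ u : A →ₗ[R] Y, ∃ v : B →ₗ[R] Y, v ∘ₗ f = u) : EV R C Y 1 := by
  rw [ev_iff] at *
  intro e
  obtain ⟨x, hx⟩ := Ext.contravariant_sequence_exact₃ h.se (ModuleCat.of R Y) e (h2 _) (n₀ := 0) rfl
  obtain ⟨u, rfl⟩ := Ext.mk₀_bijective _ _ |>.2 x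
  obtain ⟨v, hv⟩ := hl u.hom
  have hu : u = ModuleCat.ofHom f ≫ ModuleCat.ofHom v :=
    ModuleCat.hom_ext hv.symm
  have := h.se.extClass_comp
  dsimp at this
  rw [← hx, hu, ← Ext.mk₀_comp_mk₀, ← Ext.comp_assoc_of_second_deg_zero]
  refine (congrArg (fun z => Ext.comp z (Ext.mk₀ (ModuleCat.ofHom v)) _) this).trans ?_
  rw [Ext.zero_comp]

/-- dimension shift on the right -/
theorem EV.of_hom_zero {f : A →ₗ[R] B} {g : B →ₗ[R] C} (h : SES f g) (h2 : EV R B Y 1)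
    (hl : ∀ u : A →ₗ[R] Y, u = 0) : EV R C Y 1 :=
  EV.of_extend h h2 fun u => ⟨0, by rw [hl u]; simp⟩

theorem EV.of_hom_zero' {f : A →ₗ[R] B} {g : B →ₗ[R] C} (h : SES f g) (h2 : EV R X B 1)
    (hl : ∀ u : X →ₗ[R] C, u = 0) : EV R X A 1 :=
  EV.of_lift h h2 fun u => ⟨0, by rw [hl u]; simp⟩

/-- splitting -/
theorem EV.pi {ι : Type} [Fintype ι] {n : ℕ} (h : EV R X Y n) : EV R X (ι → Y) n := by
  classical
  rw [ev_iff] at *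
  intro e
  have h1 : 𝟙 (ModuleCat.of R (ι → Y)) = ∑ i, ModuleCat.ofHom (LinearMap.proj i) ≫
      ModuleCat.ofHom (LinearMap.single R (fun _ : ι => Y) i) := by
    refine ModuleCat.hom_ext (LinearMap.ext fun x => ?_)
    rw [ModuleCat.hom_sum]
    simp only [ModuleCat.hom_id, LinearMap.id_coe, id_eq, ModuleCat.hom_comp,
      ModuleCat.hom_ofHom, LinearMap.sum_apply, LinearMap.comp_apply, LinearMap.proj_apply]
    exact (LinearMap.sum_single_apply (fun _ : ι => Y) x).symm
  rw [← Ext.comp_mk₀_id e, h1, Ext.mk₀_sum, Ext.comp_sum]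
  refine Finset.sum_eq_zero fun i _ => ?_
  rw [← Ext.mk₀_comp_mk₀, ← Ext.comp_assoc_of_third_deg_zero, h (e.comp _ _), Ext.zero_comp]

theorem EV.pi_left {ι : Type} [Fintype ι] {n : ℕ} (h : EV R X Y n) : EV R (ι → X) Y n := by
  classical
  rw [ev_iff] at *
  intro e
  have h1 : 𝟙 (ModuleCat.of R (ι → X)) = ∑ i, ModuleCat.ofHom (LinearMap.proj i) ≫
      ModuleCat.ofHom (LinearMap.single R (fun _ : ι => X) i) := by
    refine ModuleCat.hom_ext (LinearMap.ext fun x => ?_)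
    rw [ModuleCat.hom_sum]
    simp only [ModuleCat.hom_id, LinearMap.id_coe, id_eq, ModuleCat.hom_comp,
      ModuleCat.hom_ofHom, LinearMap.sum_apply, LinearMap.comp_apply, LinearMap.proj_apply]
    exact (LinearMap.sum_single_apply (fun _ : ι => X) x).symm
  rw [← Ext.mk₀_id_comp e, h1, Ext.mk₀_sum, Ext.sum_comp]
  refine Finset.sum_eq_zero fun i _ => ?_
  rw [← Ext.mk₀_comp_mk₀_assoc, h (Ext.comp _ e _), Ext.comp_zero]

end ExtBasics

end QHProof


namespace QHProof

open QHPaper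

section Filtrations

variable {S : Type} [Ring S]

theorem sec_iff {M : ModuleCat.{0} S} (A B : Submodule S M) {D : Type} [AddCommGroup D]
    [Module S D] : Nonempty (subquot S A B ≃ₗ[S] D) ↔
    ∃ φ : B →ₗ[S] D, Function.Surjective φ ∧ ∀ b : B, φ b = 0 ↔ (b : M) ∈ A := by
  constructor
  · rintro ⟨e⟩
    refine ⟨e.toLinearMap ∘ₗ Submodule.mkQ _, e.surjective.comp (Submodule.mkQ_surjective _), ?_⟩
    intro b
    simp
  · rintro ⟨φ, h1, h2⟩
    have : Submodule.comap B.subtype A = LinearMap.ker φ := by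
      ext b; simp [h2]
    exact ⟨(Submodule.quotEquivOfEq _ _ this).trans (φ.quotKerEquivOfSurjective h1)⟩

variable {Λ : Type} (D : Λ → ModuleCat.{0} S)

/-- `M` is filtered by the modules `D`. -/
def Filt (M : Type) [AddCommGroup M] [Module S M] : Prop :=
  ∃ (n : ℕ) (f : Fin (n + 1) → Submodule S M) (g : Fin n → Λ),
    HasFiltrationWithSections S (ModuleCat.of S M) n f (fun i => D (g i))

variable {D}

theorem top_uncons {M : ModuleCat.{0} S} {n : ℕ} {f : Fin (n + 1 + 1) → Submodule S M}
    {g : Fin (n+1) → Λ} (h : HasFiltrationWithSections S M (n+1) f (fun i => D (g i))) :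
    ∃ (N : Submodule S M) (f' : Fin (n + 1) → Submodule S N) (π : M →ₗ[S] D (g (Fin.last n))),
      SES N.subtype π ∧ N = f (Fin.last n).castSucc ∧
      HasFiltrationWithSections S (ModuleCat.of S N) n f' (fun i => D (g i.castSucc)) := by
  obtain ⟨hm, h0, h1, hs⟩ := h
  set N := f (Fin.last n).castSucc with hN
  have hle : ∀ i : Fin (n+1), f i.castSucc ≤ N := fun i => hm (by
    rw [Fin.castSucc_le_castSucc_iff]; exact Fin.le_last i)
  obtain ⟨φ, hφ1, hφ2⟩ := (sec_iff _ _).1 (hs (Fin.last n))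
  have ht : f (Fin.last n).succ = ⊤ := by rw [Fin.succ_last]; exact h1
  refine ⟨N, fun i => Submodule.comap N.subtype (f i.castSucc),
    φ ∘ₗ LinearMap.codRestrict _ LinearMap.id (fun x => by rw [ht]; trivial), ⟨?_, ?_, ?_⟩, rfl,
      ?_, ?_, ?_, ?_⟩
  · exact N.injective_subtype
  · intro y
    obtain ⟨b, rfl⟩ := hφ1 y
    exact ⟨b, rfl⟩
  · intro y
    simp only [LinearMap.comp_apply, hφ2, LinearMap.codRestrict_apply, LinearMap.id_apply]
    simp [hN]
  · intro i j hij
    exact Submodule.comap_mono (hm (by simpa using hij))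
  · have : f (Fin.castSucc 0) = ⊥ := h0
    beta_reduce
    rw [this]
    ext x; simp
  · beta_reduce; rw [← hN]; ext x; simp
  · intro i
    obtain ⟨φ, hφ1, hφ2⟩ := (sec_iff _ _).1 (hs i.castSucc)
    rw [sec_iff]
    refine ⟨φ ∘ₗ LinearMap.codRestrict _ (N.subtype ∘ₗ Submodule.subtype _) (fun x => x.2),
      ?_, ?_⟩
    · intro y
      obtain ⟨b, rfl⟩ := hφ1 y
      exact ⟨⟨⟨b.1, hle i.succ b.2⟩, b.2⟩, rfl⟩
    · intro b
      simp only [LinearMap.comp_apply, hφ2]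
      rfl

theorem Filt.nil {M : Type} [AddCommGroup M] [Module S M] [Subsingleton M] : Filt D M :=
  ⟨0, fun _ => ⊥, Fin.elim0, fun _ _ _ => le_rfl, rfl, Subsingleton.elim _ _, fun i => i.elim0⟩

theorem Filt.top_cons {M K : Type} [AddCommGroup M] [Module S M] [AddCommGroup K] [Module S K]
    {ν : Λ} {j : K →ₗ[S] M}
    {π : M →ₗ[S] D ν} (h : SES j π) (hK : Filt D K) : Filt D M := by
  obtain ⟨n, f, g, hm, h0, h1, hs⟩ := hK
  let f' : Fin (n+1+1) → Submodule S M :=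
    Fin.snoc (α := fun _ => Submodule S M) (fun i => Submodule.map j (f i)) ⊤
  have hf' : ∀ i : Fin (n+1), f' i.castSucc = Submodule.map j (f i) := fun i => by
    simp only [f', Fin.snoc_castSucc]
  have hfl : f' (Fin.last _) = ⊤ := by simp only [f', Fin.snoc_last]
  refine ⟨n+1, f', Fin.snoc (α := fun _ => Λ) g ν, ?_, ?_, hfl, ?_⟩
  · intro a b hab
    induction b using Fin.lastCases with
    | last => rw [hfl]; exact le_top
    | cast b =>
      induction a using Fin.lastCases with
      | last => exact absurd hab (by simp [Fin.le_def]; omega)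
      | cast a =>
        rw [hf', hf']
        exact Submodule.map_mono (hm (by simpa using hab))
  · have := hf' 0
    rw [h0] at this
    simpa using this
  · intro i
    rw [sec_iff]
    induction i using Fin.lastCases with
    | last =>
      rw [Fin.succ_last, hfl]
      beta_reduce
      rw [Fin.snoc_last]
      refine ⟨π ∘ₗ Submodule.subtype _, ?_, ?_⟩
      · intro y
        obtain ⟨x, rfl⟩ := h.surj y
        exact ⟨⟨x, trivial⟩, rfl⟩
      · intro b
        rw [hf', h1]
        simp only [LinearMap.comp_apply]
        rw [h.exact]
        simp
    | cast i =>
      beta_reduce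
      rw [Fin.snoc_castSucc]
      obtain ⟨φ, hφ1, hφ2⟩ := (sec_iff _ _).1 (hs i)
      have hi : f' (i.castSucc.succ) = Submodule.map j (f i.succ) := by
        rw [Fin.succ_castSucc, hf']
      rw [hi, hf']
      let e := Submodule.equivMapOfInjective j h.inj (f i.succ)
      refine ⟨φ ∘ₗ e.symm.toLinearMap, hφ1.comp e.symm.surjective, ?_⟩
      intro b
      obtain ⟨c, rfl⟩ := e.surjective b
      simp only [LinearMap.comp_apply, LinearEquiv.coe_coe, e.symm_apply_apply, hφ2]
      simp only [e, Submodule.coe_equivMapOfInjective_apply]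
      constructor
      · intro hc
        exact Submodule.mem_map_of_mem hc
      · rintro ⟨c', hc', hcc⟩
        rw [← h.inj hcc]; exact hc'

theorem Filt.induct
    {C : ∀ (M : Type) [AddCommGroup M] [Module S M], Prop}
    (nil : ∀ (M : Type) [AddCommGroup M] [Module S M], Subsingleton M → C M)
    (cons : ∀ (M : Type) [AddCommGroup M] [Module S M] (N : Type) [AddCommGroup N] [Module S N]
      (ν : Λ) (j : N →ₗ[S] M) (π : M →ₗ[S] D ν), SES j π → Filt D N → C N → C M)
    {M : Type} [AddCommGroup M] [Module S M] (h : Filt D M) : C M := by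
  obtain ⟨n, f, g, h⟩ := h
  induction n generalizing M with
  | zero =>
    apply nil
    obtain ⟨hm, h0, h1, hs⟩ := h
    have : (⊥ : Submodule S M) = ⊤ := by rw [← h0, ← h1]; rfl
    exact (Submodule.subsingleton_iff S).1 (subsingleton_of_bot_eq_top this)
  | succ n ih =>
    obtain ⟨N, f', π, hN, -, hf⟩ := top_uncons h
    exact cons M N _ _ π hN ⟨n, f', _, hf⟩ (ih f' _ hf)

theorem Filt.bot_cons {M Q K : Type} [AddCommGroup M] [Module S M] [AddCommGroup Q] [Module S Q]
    [AddCommGroup K] [Module S K]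
    {ν : Λ} {j : K →ₗ[S] M} {π : M →ₗ[S] Q} (e : K ≃ₗ[S] D ν) (h : SES j π) (hK : Filt D Q) :
    Filt D M := by
  refine Filt.induct (D := D) (C := fun Q _ _ => ∀ (M : Type) [AddCommGroup M] [Module S M]
    (j : K →ₗ[S] M) (π : M →ₗ[S] Q), SES j π → Filt D M) ?_ ?_ hK M j π h
  · intro Q _ _ hQ M _ _ j π h
    have hj : Function.Surjective j := fun x => (h.exact x).1 (Subsingleton.elim _ _)
    let e' := (LinearEquiv.ofBijective j ⟨h.inj, hj⟩).symm.trans e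
    refine Filt.top_cons (K := PUnit) (j := 0) (π := e'.toLinearMap) ⟨?_, e'.surjective, ?_⟩ Filt.nil
    · exact Function.injective_of_subsingleton _
    · intro y
      simp only [LinearEquiv.coe_coe, e'.map_eq_zero_iff]
      constructor
      · rintro rfl; exact ⟨0, rfl⟩
      · rintro ⟨_, rfl⟩; rfl
  · intro Q _ _ N _ _ ν' i q hq hN ih M _ _ j π h
    let K' := LinearMap.ker (q ∘ₗ π)
    have hr : ∀ x : K', ∃ y, i y = π x := fun x => (hq.exact _).1 x.2
    let e0 := LinearEquiv.ofInjective i hq.inj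
    let π' : K' →ₗ[S] N := e0.symm.toLinearMap ∘ₗ
      LinearMap.codRestrict (LinearMap.range i) (π ∘ₗ K'.subtype) (fun x => hr x)
    have hπ' : ∀ x : K', i (π' x) = π x := by
      intro x
      have : e0 (π' x) = ⟨π x, hr x⟩ := by
        simp only [π', LinearMap.comp_apply, LinearEquiv.coe_coe, e0.apply_symm_apply]; rfl
      exact congrArg Subtype.val this
    have hjK : ∀ x, j x ∈ K' := fun x => by
      simp only [K', LinearMap.mem_ker, LinearMap.comp_apply, h.exact.apply_apply_eq_zero, map_zero]
    refine Filt.top_cons (j := K'.subtype) (π := q ∘ₗ π)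
      (SES.of_surj _ (hq.surj.comp h.surj)) (ih K' (j.codRestrict K' hjK) π' ⟨?_, ?_, ?_⟩)
    · intro a b hab
      exact h.inj (congrArg Subtype.val hab)
    · intro y
      obtain ⟨x, hx⟩ := h.surj (i y)
      have hxK : x ∈ K' := by
        simp only [K', LinearMap.mem_ker, LinearMap.comp_apply, hx, hq.exact.apply_apply_eq_zero]
      exact ⟨⟨x, hxK⟩, hq.inj ((hπ' _).trans hx)⟩
    · intro y
      constructor
      · intro hy
        have := hπ' y
        rw [hy, map_zero] at this
        obtain ⟨z, hz⟩ := (h.exact _).1 this.symm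
        exact ⟨z, Subtype.ext hz⟩
      · rintro ⟨z, rfl⟩
        apply hq.inj
        rw [hπ', map_zero]
        exact h.exact.apply_apply_eq_zero z

end Filtrations

end QHProof


namespace QHProof

set_option linter.all false

open QHPaper

section Coind

/-- the coinduced module `Hom_k(S,M)` -/
def Coind (k S M : Type) [Field k] [Ring S] [Algebra k S] [AddCommGroup M] [Module k M] : Type :=
  S →ₗ[k] M

variable {k S M : Type} [Field k] [Ring S] [Algebra k S] [AddCommGroup M] [Module k M]

instance : AddCommGroup (Coind k S M) := inferInstanceAs (AddCommGroup (S →ₗ[k] M))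
instance : Module k (Coind k S M) := inferInstanceAs (Module k (S →ₗ[k] M))

instance : Module S (Coind k S M) where
  smul a φ := (show S →ₗ[k] M from φ) ∘ₗ LinearMap.mulRight k a
  one_smul φ := LinearMap.ext fun s => congrArg (show S →ₗ[k] M from φ) (mul_one s)
  mul_smul a b φ := LinearMap.ext fun s =>
    congrArg (show S →ₗ[k] M from φ) (mul_assoc s a b).symm
  smul_zero a := rfl
  smul_add a φ ψ := rfl
  add_smul a b φ := LinearMap.ext fun s =>
    (congrArg (show S →ₗ[k] M from φ) (mul_add s a b)).trans (map_add (show S →ₗ[k] M from φ) _ _)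
  zero_smul φ := LinearMap.ext fun s =>
    (congrArg (show S →ₗ[k] M from φ) (mul_zero s)).trans (map_zero (show S →ₗ[k] M from φ))

/-- evaluation -/
def Coind.ev (φ : Coind k S M) : S →ₗ[k] M := φ

theorem Coind.ev_smul (a : S) (φ : Coind k S M) (s : S) : (a • φ).ev s = φ.ev (s * a) := rfl

instance : IsScalarTower k S (Coind k S M) where
  smul_assoc c a φ := LinearMap.ext fun s => by
    show φ.ev (s * (c • a)) = c • φ.ev (s * a)
    rw [mul_smul_comm, map_smul]

instance [Module.Finite k S] [Module.Finite k M] : Module.Finite S (Coind k S M) := by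
  have : Module.Finite k (Coind k S M) := inferInstanceAs (Module.Finite k (S →ₗ[k] M))
  exact Module.Finite.of_restrictScalars_finite k S _

instance : Module.Injective S (Coind k S M) where
  out X Y _ _ _ _ f hf g := by
    letI : Module k X := Module.compHom X (algebraMap k S)
    letI : Module k Y := Module.compHom Y (algebraMap k S)
    have sX : ∀ (c : k) (x : X), c • x = algebraMap k S c • x := fun _ _ => rfl
    have sY : ∀ (c : k) (x : Y), c • x = algebraMap k S c • x := fun _ _ => rfl
    have sC : ∀ (c : k) (x : Coind k S M), algebraMap k S c • x = c • x := fun c x => by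
      rw [algebraMap_smul]
    let f0 : X →ₗ[k] Y := { toFun := f
                            map_add' := map_add f
                            map_smul' := fun c x => by
                              simp only [sX, sY, map_smul]; rfl }
    let g0 : X →ₗ[k] M := { toFun := fun x => (g x).ev 1
                            map_add' := fun x y => by rw [map_add]; rfl
                            map_smul' := fun c x => by
                              rw [sX, map_smul, sC]; rfl }
    obtain ⟨r, hr⟩ := LinearMap.exists_leftInverse_of_injective f0 (LinearMap.ker_eq_bot.2 hf)
    let h0 : Y →ₗ[k] M := g0 ∘ₗ r
    have hh : ∀ x, h0 (f x) = (g x).ev 1 := fun x => congrArg g0 (LinearMap.congr_fun hr x)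
    refine ⟨{ toFun := fun y => ({ toFun := fun s => h0 (s • y)
                                   map_add' := fun a b => by rw [add_smul, map_add]
                                   map_smul' := fun c s => by
                                    rw [Algebra.smul_def, mul_smul, ← sY, map_smul]; rfl } :
                                    S →ₗ[k] M)
              map_add' := fun a b => LinearMap.ext fun s => by
                show h0 (s • (a + b)) = h0 (s • a) + h0 (s • b)
                rw [smul_add, map_add]
              map_smul' := fun a y => LinearMap.ext fun s => by
                show h0 (s • a • y) = h0 ((s * a) • y)
                rw [mul_smul] }, fun x => LinearMap.ext fun s => ?_⟩
    show h0 (s • f x) = (g x).ev s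
    rw [← map_smul, hh, map_smul, Coind.ev_smul, one_mul]

end Coind

/-- properties of finite dimensional algebras that we use -/
class FDA (S : Type) [Ring S] : Prop where
  art : IsArtinianRing S
  emb : ∀ (M : Type) [AddCommGroup M] [Module S M] [Module.Finite S M],
    ∃ (I : Type) (_ : AddCommGroup I) (_ : Module S I) (i : M →ₗ[S] I),
      Module.Finite S I ∧ Module.Injective S I ∧ Function.Injective i

instance (S : Type) [Ring S] [FDA S] : IsArtinianRing S := FDA.art

theorem fda_of_finite (k S : Type) [Field k] [Ring S] [Algebra k S] [Module.Finite k S] :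
    FDA S where
  art := IsArtinianRing.of_finite k S
  emb M _ _ _ := by
    letI : Module k M := Module.compHom M (algebraMap k S)
    haveI : IsScalarTower k S M := ⟨fun c s m => by
      rw [Algebra.smul_def, mul_smul]; rfl⟩
    haveI : Module.Finite k M := Module.Finite.trans S M
    refine ⟨Coind k S M, inferInstance, inferInstance,
      { toFun := fun m => ({ toFun := fun s => s • m
                             map_add' := fun a b => add_smul a b m
                             map_smul' := fun c s => smul_assoc c s m } : S →ₗ[k] M)
        map_add' := fun a b => LinearMap.ext fun s => smul_add s a b
        map_smul' := fun a m => LinearMap.ext fun s => (mul_smul s a m).symm }, inferInstance,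
        inferInstance, fun a b hab => ?_⟩
    have h1 : (1 : S) • a = (1 : S) • b := LinearMap.congr_fun hab (1 : S)
    rwa [one_smul, one_smul] at h1

section Length

variable {S : Type} [Ring S] [FDA S]

variable (S) in
/-- the length of a module as a natural number -/
noncomputable def ln (M : Type) [AddCommGroup M] [Module S M] : ℕ := (Module.length S M).toNat

variable {A B C : Type} [AddCommGroup A] [Module S A] [AddCommGroup B] [Module S B]
  [AddCommGroup C] [Module S C]

theorem fin_sub (N : Submodule S B) [Module.Finite S B] : Module.Finite S N := inferInstance

theorem SES.finite_left {f : A →ₗ[S] B} {g : B →ₗ[S] C} (h : SES f g) [Module.Finite S B] :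
    Module.Finite S A := Module.Finite.of_injective f h.inj

theorem SES.finite_right {f : A →ₗ[S] B} {g : B →ₗ[S] C} (h : SES f g) [Module.Finite S B] :
    Module.Finite S C := Module.Finite.of_surjective g h.surj

theorem SES.finite_mid {f : A →ₗ[S] B} {g : B →ₗ[S] C} (h : SES f g) [Module.Finite S A]
    [Module.Finite S C] : Module.Finite S B :=
  ⟨Submodule.fg_of_fg_map_of_fg_inf_ker g
    (by rw [Submodule.map_top, LinearMap.range_eq_top.2 h.surj]; exact Module.Finite.fg_top)
    (by
      rw [top_inf_eq, h.exact.linearMap_ker_eq, ← Submodule.map_top]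
      exact Module.Finite.fg_top.map f)⟩

theorem SES.ln {f : A →ₗ[S] B} {g : B →ₗ[S] C} (h : SES f g) [Module.Finite S B] :
    ln S B = ln S A + ln S C := by
  have := h.finite_left
  have := h.finite_right
  unfold QHProof.ln
  rw [Module.length_eq_add_of_exact f g h.inj h.surj h.exact]
  exact ENat.toNat_add Module.length_ne_top Module.length_ne_top

theorem ln_pos [Module.Finite S B] [Nontrivial B] : 0 < ln S B := by
  have h1 : 0 < Module.length S B := Module.length_pos
  have h2 : Module.length S B ≠ ⊤ := Module.length_ne_top
  unfold ln
  rw [← ENat.natCast_toNat h2] at h1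
  exact_mod_cast h1

theorem exists_simple_quot [Module.Finite S B] [Nontrivial B] :
    ∃ N : Submodule S B, IsSimpleModule S (B ⧸ N) := by
  obtain h | ⟨N, hN, -⟩ := IsCoatomic.eq_top_or_exists_le_coatom (⊥ : Submodule S B)
  · exact absurd h bot_ne_top
  · exact ⟨N, isSimpleModule_iff_isCoatom.2 hN⟩

theorem exists_simple_sub [Module.Finite S B] (N : Submodule S B) (hN : N ≠ ⊥) :
    ∃ N' : Submodule S B, N' ≤ N ∧ IsSimpleModule S N' := by
  have : IsAtomic (Submodule S B) := isAtomic_of_orderBot_wellFounded_lt wellFounded_lt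
  obtain h | ⟨N', hN', h⟩ := IsAtomic.eq_bot_or_exists_atom_le N
  · exact absurd h hN
  · exact ⟨N', h, isSimpleModule_iff_isAtom.2 hN'⟩

end Length

end QHProof


namespace QHProof

set_option linter.all false

open QHPaper

section QH

variable {S : Type} [Ring S] {Λ : Type} [Fintype Λ] [PartialOrder Λ] (Q : QHData S Λ)
variable {A B C M N X Y : Type} [AddCommGroup A] [Module S A] [AddCommGroup B] [Module S B]
  [AddCommGroup C] [Module S C] [AddCommGroup M] [Module S M] [AddCommGroup N] [Module S N]
  [AddCommGroup X] [Module S X] [AddCommGroup Y] [Module S Y]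

instance instProjP (l : Λ) : Module.Projective S (Q.P l) := (Q.projCover l).1
instance instSimpL (l : Λ) : IsSimpleModule S (Q.L l) := Q.simpleL l
instance instNtL (l : Λ) : Nontrivial (Q.L l) := IsSimpleModule.nontrivial S _
instance instFinL (l : Λ) : Module.Finite S (Q.L l) := Q.finiteL l
instance instInjI (l : Λ) : Module.Injective S (Q.I l) := (Q.injHull l).1

/-- the projection `P → L` -/
noncomputable def pr (l : Λ) : Q.P l →ₗ[S] Q.L l := (Q.projCover l).2.choose

theorem pr_surj (l : Λ) : Function.Surjective (pr Q l) := (Q.projCover l).2.choose_spec.1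

theorem pr_sup (l : Λ) (N : Submodule S (Q.P l)) (h : N ⊔ LinearMap.ker (pr Q l) = ⊤) : N = ⊤ :=
  (Q.projCover l).2.choose_spec.2 N h

theorem pr_coatom (l : Λ) : IsCoatom (LinearMap.ker (pr Q l)) := by
  rw [← isSimpleModule_iff_isCoatom]
  exact IsSimpleModule.congr ((pr Q l).quotKerEquivOfSurjective (pr_surj Q l))

theorem ker_le_pr {l : Λ} (a : Q.P l →ₗ[S] M) (ha : a ≠ 0) :
    LinearMap.ker a ≤ LinearMap.ker (pr Q l) := by
  by_contra h
  have h1 : LinearMap.ker a ⊔ LinearMap.ker (pr Q l) = ⊤ := by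
    rw [sup_comm]
    exact (pr_coatom Q l).2 _ (lt_of_le_of_ne le_sup_left fun h2 => h (by
      rw [h2]; exact le_sup_right))
  exact ha (LinearMap.ker_eq_top.1 (pr_sup Q l _ h1))

theorem eq_of_hom_L {l m : Λ} (a : Q.P l →ₗ[S] Q.L m) (ha : a ≠ 0) : l = m := by
  by_contra hne
  have hs := LinearMap.surjective_of_ne_zero ha
  have hc : IsCoatom (LinearMap.ker a) := by
    rw [← isSimpleModule_iff_isCoatom]
    exact IsSimpleModule.congr (a.quotKerEquivOfSurjective hs)
  have h := ker_le_pr Q a ha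
  have heq : LinearMap.ker a = LinearMap.ker (pr Q l) := by
    by_contra h2
    exact (pr_coatom Q l).1 (hc.2 _ (lt_of_le_of_ne h h2))
  exact (Q.nonisoL l m hne).false (((pr Q l).quotKerEquivOfSurjective (pr_surj Q l)).symm.trans
    ((Submodule.quotEquivOfEq _ _ heq.symm).trans (a.quotKerEquivOfSurjective hs)))

instance instFinP (l : Λ) : Module.Finite S (Q.P l) := by
  obtain ⟨y, hy⟩ := exists_ne (0 : Q.L l)
  obtain ⟨v, rfl⟩ := pr_surj Q l y
  have h : Submodule.span S {v} = ⊤ := by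
    apply pr_sup Q l
    rw [sup_comm]
    refine (pr_coatom Q l).2 _ (lt_of_le_of_ne le_sup_left fun h2 => hy ?_)
    have : v ∈ LinearMap.ker (pr Q l) := by
      rw [h2]; exact Submodule.mem_sup_right (Submodule.mem_span_singleton_self v)
    exact this
  exact ⟨⟨{v}, by simpa using h⟩⟩

/-- `L μ` is a composition factor of `M` -/
def Has (m : Λ) (M : Type) [AddCommGroup M] [Module S M] : Prop := ∃ a : Q.P m →ₗ[S] M, a ≠ 0

variable {Q}

theorem Has.inj {m : Λ} (f : M →ₗ[S] N) (hf : Function.Injective f) (h : Has Q m M) : Has Q m N := by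
  obtain ⟨a, ha⟩ := h
  refine ⟨f ∘ₗ a, fun h => ha (LinearMap.ext fun x => hf ?_)⟩
  simpa using LinearMap.congr_fun h x

theorem Has.surj {m : Λ} (f : M →ₗ[S] N) (hf : Function.Surjective f) (h : Has Q m N) :
    Has Q m M := by
  obtain ⟨a, ha⟩ := h
  obtain ⟨b, hb⟩ := Module.projective_lifting_property f a hf
  exact ⟨b, fun h => ha (by rw [← hb, h, LinearMap.comp_zero])⟩

theorem Has.ses {m : Λ} {f : A →ₗ[S] B} {g : B →ₗ[S] C} (hs : SES f g) (h : Has Q m B) :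
    Has Q m A ∨ Has Q m C := by
  by_cases hC : Has Q m C
  · exact Or.inr hC
  obtain ⟨a, ha⟩ := h
  have h0 : g ∘ₗ a = 0 := by by_contra h; exact hC ⟨_, h⟩
  left
  obtain ⟨y, hy⟩ : ∃ y, a y ≠ 0 := by by_contra! h; exact ha (LinearMap.ext h)
  let e := LinearEquiv.ofInjective f hs.inj
  refine ⟨e.symm.toLinearMap ∘ₗ a.codRestrict (LinearMap.range f)
    (fun x => (hs.exact _).1 (LinearMap.congr_fun h0 x)), fun h => hy ?_⟩
  have := LinearMap.congr_fun h y
  simp only [LinearMap.comp_apply, LinearMap.zero_apply, LinearEquiv.coe_coe,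
    LinearEquiv.map_eq_zero_iff] at this
  exact congrArg Subtype.val this

variable (Q) in
theorem hasL (m : Λ) : Has Q m (Q.L m) := by
  refine ⟨pr Q m, fun h => ?_⟩
  obtain ⟨y, hy⟩ := exists_ne (0 : Q.L m)
  obtain ⟨v, rfl⟩ := pr_surj Q m y
  exact hy (by rw [h]; rfl)

theorem Has.eq {l m : Λ} (h : Has Q l (Q.L m)) : l = m := by
  obtain ⟨a, ha⟩ := h
  exact eq_of_hom_L Q a ha

theorem exists_factor {m : Λ} (a : Q.P m →ₗ[S] M) (ha : a ≠ 0) :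
    ∃ φ : LinearMap.range a →ₗ[S] Q.L m, ∀ x, φ ⟨a x, x, rfl⟩ = pr Q m x := by
  refine ⟨(LinearMap.ker a).liftQ (pr Q m) (ker_le_pr Q a ha) ∘ₗ
    a.quotKerEquivRange.symm.toLinearMap, fun x => ?_⟩
  have : a.quotKerEquivRange.symm ⟨a x, x, rfl⟩ = (LinearMap.ker a).mkQ x := by
    rw [LinearEquiv.symm_apply_eq]; rfl
  rw [LinearMap.comp_apply, LinearEquiv.coe_coe, this]
  simp

theorem has_iff {m : Λ} : IsCompFactor S (Q.L m) (ModuleCat.of S M) ↔ Has Q m M := by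
  constructor
  · rintro ⟨A, B, hAB, ⟨e⟩⟩
    have h1 : Has Q m (subquot S A B) := (hasL Q m).inj e.symm.toLinearMap e.symm.injective
    exact (h1.surj _ (Submodule.mkQ_surjective _)).inj _ B.injective_subtype
  · rintro ⟨a, ha⟩
    obtain ⟨φ, hφ⟩ := exists_factor a ha
    refine ⟨Submodule.map a (LinearMap.ker (pr Q m)), LinearMap.range a, ?_, ?_⟩
    · exact LinearMap.map_le_range
    · rw [sec_iff]
      refine ⟨φ, fun y => ?_, ?_⟩
      · obtain ⟨v, rfl⟩ := pr_surj Q m y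
        exact ⟨_, hφ v⟩
      · rintro ⟨_, x, rfl⟩
        rw [hφ]
        constructor
        · intro h; exact ⟨x, h, rfl⟩
        · rintro ⟨x', hx', h⟩
          have h2 : x' - x ∈ LinearMap.ker a := by
            rw [LinearMap.mem_ker, map_sub, sub_eq_zero]; exact h
          have h3 := ker_le_pr Q a ha h2
          rw [LinearMap.mem_ker, map_sub, sub_eq_zero] at h3
          rw [← h3]; exact hx'

variable (Q)

theorem std_ex (l : Λ) : ∃ q : Q.P l →ₗ[S] Q.std l, Function.Surjective q ∧
    (∀ m, Has Q m (Q.std l) → m ≤ l) ∧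
    ∀ (M : Type) [AddCommGroup M] [Module S M] (f : Q.P l →ₗ[S] M), (∀ m, Has Q m M → m ≤ l) →
      LinearMap.ker q ≤ LinearMap.ker f := by
  obtain ⟨K, ⟨e⟩, h1, h2⟩ := Q.stdSpec l
  have hk : LinearMap.ker (e.symm.toLinearMap ∘ₗ K.mkQ) = K := by
    ext x; simp
  refine ⟨e.symm.toLinearMap ∘ₗ K.mkQ, e.symm.surjective.comp K.mkQ_surjective, fun m hm => ?_, ?_⟩
  · exact h1 m (has_iff.2 (hm.inj e.toLinearMap e.injective))
  · intro M _ _ f hf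
    rw [hk]
    refine h2 _ fun m hm => hf m ?_
    exact (has_iff.1 hm).inj ((LinearMap.ker f).liftQ f le_rfl)
      (LinearMap.ker_eq_bot.1 (Submodule.ker_liftQ_eq_bot _ _ _ le_rfl))

theorem costd_ex (l : Λ) : ∃ i : Q.costd l →ₗ[S] Q.I l, Function.Injective i ∧
    (∀ m, Has Q m (Q.costd l) → m ≤ l) ∧
    ∀ W : Submodule S (Q.I l), (∀ m, Has Q m W → m ≤ l) → W ≤ LinearMap.range i := by
  obtain ⟨V, ⟨e⟩, h1, h2⟩ := Q.costdSpec l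
  refine ⟨V.subtype ∘ₗ e.toLinearMap, V.injective_subtype.comp e.injective, fun m hm => ?_, ?_⟩
  · exact h1 m (has_iff.2 (hm.inj e.toLinearMap e.injective))
  · intro W hW
    have : LinearMap.range (V.subtype ∘ₗ e.toLinearMap) = V := by
      rw [LinearMap.range_comp, LinearEquiv.range, Submodule.map_top, Submodule.range_subtype]
    rw [this]
    exact h2 _ fun m hm => hW m (has_iff.1 hm)

variable {Q}

theorem has_std_le {l m : Λ} (h : Has Q m (Q.std l)) : m ≤ l := (std_ex Q l).choose_spec.2.1 m h
theorem has_costd_le {l m : Λ} (h : Has Q m (Q.costd l)) : m ≤ l :=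
  (costd_ex Q l).choose_spec.2.1 m h

theorem series_index {n : ℕ} {f : Fin (n+1) → Submodule S M} (h0 : f 0 = ⊥)
    (h1 : f (Fin.last n) = ⊤) (N : Submodule S M) (hN : N ≠ ⊥) :
    ∃ i : Fin n, N ≤ f i.succ ∧ ¬ N ≤ f i.castSucc := by
  by_contra! h
  apply hN
  rw [eq_bot_iff, ← h0]
  refine Fin.reverseInduction (motive := fun i => N ≤ f i) ?_ (fun i hi => h i hi) 0
  rw [h1]; exact le_top

variable (Q)

theorem std_top (l : Λ) : ∃ t : Q.std l →ₗ[S] Q.L l, Function.Surjective t ∧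
    (∀ N : Submodule S (Q.std l), N ⊔ LinearMap.ker t = ⊤ → N = ⊤) ∧
    ∀ m, Has Q m (LinearMap.ker t) → m < l := by
  obtain ⟨q, hq, hle, hu⟩ := std_ex Q l
  have hk := hu _ (pr Q l) (fun m hm => hm.eq.le)
  let t : Q.std l →ₗ[S] Q.L l := (LinearMap.ker q).liftQ (pr Q l) hk ∘ₗ
    (q.quotKerEquivOfSurjective hq).symm.toLinearMap
  have ht : ∀ x, t (q x) = pr Q l x := by
    intro x
    have : (q.quotKerEquivOfSurjective hq).symm (q x) = (LinearMap.ker q).mkQ x := by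
      rw [LinearEquiv.symm_apply_eq]; rfl
    simp only [t]
    rw [LinearMap.comp_apply, LinearEquiv.coe_coe, this]
    simp
  refine ⟨t, ?_, ?_, ?_⟩
  · intro y
    obtain ⟨x, rfl⟩ := pr_surj Q l y
    exact ⟨_, ht x⟩
  · intro N hN
    have h1 : Submodule.comap q N = ⊤ := by
      apply pr_sup Q l
      rw [eq_top_iff]
      intro x _
      have : q x ∈ N ⊔ LinearMap.ker t := by rw [hN]; trivial
      obtain ⟨a, ha, b, hb, hab⟩ := Submodule.mem_sup.1 this
      obtain ⟨a', rfl⟩ := hq a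
      obtain ⟨b', rfl⟩ := hq b
      rw [LinearMap.mem_ker, ht] at hb
      have hxx : x - a' ∈ LinearMap.ker (pr Q l) := by
        rw [LinearMap.mem_ker, ← ht, map_sub, ← hab, add_sub_cancel_left, ht, hb]
      rw [← add_sub_cancel a' x]
      exact Submodule.add_mem_sup ha hxx
    rw [eq_top_iff]
    intro y _
    obtain ⟨x, rfl⟩ := hq y
    have : x ∈ Submodule.comap q N := by rw [h1]; trivial
    exact this
  · intro m hm
    have hml : m ≤ l := hle m (hm.inj _ (Submodule.injective_subtype _))
    refine lt_of_le_of_ne hml ?_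
    rintro rfl
    obtain ⟨a, ha⟩ := hm
    obtain ⟨n, f, hmono, h0, h1, hs, hc⟩ := Q.multOne m
    rw [Nat.card_eq_one_iff_unique] at hc
    obtain ⟨hc, -⟩ := hc
    have key : ∀ (γ : Q.P m →ₗ[S] Q.std m) (i : Fin n), LinearMap.range γ ≤ f i.succ →
        ¬ LinearMap.range γ ≤ f i.castSucc →
        Nonempty ((subquot S (f i.castSucc) (f i.succ)) ≃ₗ[S] ↥(Q.L m)) ∧
        ∀ x ∈ LinearMap.ker (pr Q m), γ x ∈ f i.castSucc := by
      intro γ i hi1 hi2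
      obtain ⟨ν, ⟨e⟩⟩ := Q.fullL (ModuleCat.of S (subquot S (f i.castSucc) (f i.succ))) (hs i)
      let γ' : Q.P m →ₗ[S] Q.L ν := e.toLinearMap ∘ₗ Submodule.mkQ _ ∘ₗ
        γ.codRestrict (f i.succ) (fun x => hi1 ⟨x, rfl⟩)
      have hγ' : ∀ x, γ' x = 0 ↔ γ x ∈ f i.castSucc := by
        intro x
        simp only [γ', LinearMap.comp_apply, LinearEquiv.coe_coe, LinearEquiv.map_eq_zero_iff,
          Submodule.mkQ_apply, Submodule.Quotient.mk_eq_zero]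
        rfl
      have hne : γ' ≠ 0 := by
        intro h
        apply hi2
        rintro _ ⟨x, rfl⟩
        exact (hγ' x).1 (by rw [h]; rfl)
      have := eq_of_hom_L Q γ' hne
      subst this
      refine ⟨⟨e⟩, fun x hx => (hγ' x).1 ?_⟩
      have hcc : IsCoatom (LinearMap.ker γ') := by
        rw [← isSimpleModule_iff_isCoatom]
        exact IsSimpleModule.congr (γ'.quotKerEquivOfSurjective (LinearMap.surjective_of_ne_zero hne))
      have : LinearMap.ker γ' = LinearMap.ker (pr Q m) := by
        by_contra h2
        exact (pr_coatom Q m).1 (hcc.2 _ (lt_of_le_of_ne (ker_le_pr Q γ' hne) h2))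
      rw [← this] at hx
      exact hx
    have hqne : LinearMap.range q ≠ ⊥ := by
      intro h
      obtain ⟨b, hb⟩ := hasL Q m
      apply (hasL Q m).choose_spec
      rw [LinearMap.range_eq_bot] at h
      refine absurd (LinearMap.ext fun x => ?_) hb
      have hpr : pr Q m = 0 := LinearMap.ext fun x => by rw [← ht, h]; simp
      have hbk := ker_le_pr Q b hb
      obtain ⟨y, hy⟩ := pr_surj Q m (b x)
      rw [← hy, hpr]; rfl
    obtain ⟨i, hi1, hi2⟩ := series_index h0 h1 _ hqne
    let a' : Q.P m →ₗ[S] Q.std m := (LinearMap.ker t).subtype ∘ₗ a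
    have hane : LinearMap.range a' ≠ ⊥ := by
      intro h
      rw [LinearMap.range_eq_bot] at h
      apply ha
      ext x
      simpa [a'] using LinearMap.congr_fun h x
    obtain ⟨j, hj1, hj2⟩ := series_index h0 h1 _ hane
    have hij : i = j := congrArg Subtype.val (hc.elim ⟨i, (key q i hi1 hi2).1⟩
      ⟨j, (key a' j hj1 hj2).1⟩)
    subst hij
    apply hj2
    rintro _ ⟨x, rfl⟩
    obtain ⟨z, hz⟩ := hq (a' x)
    rw [← hz]
    apply (key q i hi1 hi2).2
    rw [LinearMap.mem_ker, ← ht, hz]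
    exact (a x).2

theorem std_ne (l : Λ) : Nontrivial (Q.std l) := by
  obtain ⟨t, ht, -⟩ := std_top Q l
  exact ht.nontrivial

instance instFinStd (l : Λ) : Module.Finite S (Q.std l) :=
  Module.Finite.of_surjective _ (std_ex Q l).choose_spec.1

theorem proj_ses (l : Λ) : ∃ (R : Submodule S (Q.P l)) (π : Q.P l →ₗ[S] Q.std l),
    SES R.subtype π ∧ Filt (fun ν : {ν // l < ν} => Q.std ν) R := by
  obtain ⟨n, f, g, hf, hg, hc⟩ := Q.projFilt l
  rw [Nat.card_eq_one_iff_unique] at hc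
  obtain ⟨hc, ⟨i0, hi0⟩⟩ := hc
  cases n with
  | zero => exact i0.elim0
  | succ n =>
    obtain ⟨N, f', π, hN, hNf, hf'⟩ := top_uncons hf
    obtain ⟨t, ht, -⟩ := std_top Q (g (Fin.last n))
    have hl : l = g (Fin.last n) := by
      have h : Has Q (g (Fin.last n)) (Q.P l) := (hasL Q _).surj (t ∘ₗ π) (ht.comp hN.surj)
      refine eq_of_hom_L Q (t ∘ₗ π) fun h0 => ?_
      obtain ⟨y, hy⟩ := exists_ne (0 : Q.L (g (Fin.last n)))
      obtain ⟨v, rfl⟩ := (ht.comp hN.surj) y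
      exact hy (LinearMap.congr_fun h0 v)
    have hg' : ∀ i : Fin n, l < g i.castSucc := fun i => lt_of_le_of_ne (hg _) fun h => by
      have := congrArg Subtype.val (hc.elim ⟨i.castSucc, h.symm⟩ ⟨Fin.last n, hl.symm⟩)
      exact absurd this (Fin.castSucc_lt_last i).ne
    refine ⟨N, ?_⟩
    generalize g (Fin.last n) = m at *
    subst hl
    exact ⟨π, hN, n, f', fun i => ⟨g i.castSucc, hg' i⟩, hf'⟩

end QH

end QHProof


namespace QHProof

set_option linter.all false

open QHPaper

section QH2

variable {S : Type} [Ring S] {Λ : Type} [Fintype Λ] [PartialOrder Λ] (Q : QHData S Λ)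
variable {A B C M N X Y : Type} [AddCommGroup A] [Module S A] [AddCommGroup B] [Module S B]
  [AddCommGroup C] [Module S C] [AddCommGroup M] [Module S M] [AddCommGroup N] [Module S N]
  [AddCommGroup X] [Module S X] [AddCommGroup Y] [Module S Y]

theorem hom_filt_zero {I : Type} {D : I → ModuleCat.{0} S} (hM : Filt D M)
    (h : ∀ i (u : D i →ₗ[S] Y), u = 0) : ∀ u : M →ₗ[S] Y, u = 0 := by
  refine Filt.induct (D := D) (C := fun M _ _ => ∀ u : M →ₗ[S] Y, u = 0) ?_ ?_ hM
  · intro M _ _ hM u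
    ext x
    rw [Subsingleton.elim x 0, map_zero, map_zero]
  · intro M _ _ N _ _ i j π hs _ ih u
    have h1 := ih (u ∘ₗ j)
    have h2 : LinearMap.ker π ≤ LinearMap.ker u := by
      rw [hs.exact.linearMap_ker_eq]
      rintro _ ⟨x, rfl⟩
      exact LinearMap.congr_fun h1 x
    have h3 := h i ((LinearMap.ker π).liftQ u h2 ∘ₗ
      (π.quotKerEquivOfSurjective hs.surj).symm.toLinearMap)
    ext x
    have h4 := LinearMap.congr_fun h3 (π x)
    have : (π.quotKerEquivOfSurjective hs.surj).symm (π x) = (LinearMap.ker π).mkQ x := by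
      rw [LinearEquiv.symm_apply_eq]; rfl
    rw [LinearMap.comp_apply, LinearEquiv.coe_coe, this] at h4
    simpa using h4

theorem factor_surj (π : M →ₗ[S] N) (hπ : Function.Surjective π) (u : M →ₗ[S] X)
    (h : ∀ x, π x = 0 → u x = 0) : ∃ v : N →ₗ[S] X, v ∘ₗ π = u := by
  refine ⟨(LinearMap.ker π).liftQ u h ∘ₗ (π.quotKerEquivOfSurjective hπ).symm.toLinearMap, ?_⟩
  ext x
  have : (π.quotKerEquivOfSurjective hπ).symm (π x) = (LinearMap.ker π).mkQ x := by
    rw [LinearEquiv.symm_apply_eq]; rfl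
  rw [LinearMap.comp_apply, LinearMap.comp_apply, LinearEquiv.coe_coe, this]
  exact Submodule.liftQ_apply _ _ _

theorem factor_inj (i : N →ₗ[S] M) (hi : Function.Injective i) (u : X →ₗ[S] M)
    (h : ∀ x, u x ∈ LinearMap.range i) : ∃ v : X →ₗ[S] N, i ∘ₗ v = u := by
  refine ⟨(LinearEquiv.ofInjective i hi).symm.toLinearMap ∘ₗ u.codRestrict _ h, ?_⟩
  ext x
  have := (LinearEquiv.ofInjective i hi).apply_symm_apply (u.codRestrict _ h x)
  exact congrArg Subtype.val this

theorem costd_soc0 (l : Λ) : ∃ s : Q.L l →ₗ[S] Q.costd l, Function.Injective s ∧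
    ∀ N : Submodule S (Q.costd l), N ≠ ⊥ → LinearMap.range s ≤ N := by
  obtain ⟨-, j, hj, hess⟩ := Q.injHull l
  obtain ⟨i, hi, hle, hu⟩ := costd_ex Q l
  obtain ⟨s, hs⟩ := factor_inj i hi j (fun x => hu (LinearMap.range j) (fun m hm =>
    (Has.inj (LinearEquiv.ofInjective j hj).symm.toLinearMap (LinearEquiv.injective _) hm).eq.le)
      ⟨x, rfl⟩)
  have hsi : Function.Injective s := by
    apply Function.Injective.of_comp (f := i)
    have : ⇑i ∘ ⇑s = ⇑j := congrArg DFunLike.coe hs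
    rw [this]; exact hj
  refine ⟨s, hsi, fun N hN => ?_⟩
  have hat : IsAtom (LinearMap.range s) := by
    rw [← isSimpleModule_iff_isAtom]
    exact IsSimpleModule.congr (LinearEquiv.ofInjective s hsi).symm
  by_contra hle
  have h1 : LinearMap.range s ⊓ N = ⊥ := by
    rcases hat.le_iff.1 (inf_le_left : LinearMap.range s ⊓ N ≤ _) with h | h
    · exact h
    · exact absurd (h ▸ inf_le_right) hle
  apply hN
  have h2 : Submodule.map i N = ⊥ := by
    apply hess
    rw [eq_bot_iff]
    rintro _ ⟨⟨y, hy, rfl⟩, ⟨x, hx⟩⟩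
    rw [← hs] at hx
    have hxy : s x = y := hi hx
    have : y ∈ LinearMap.range s ⊓ N := ⟨⟨x, hxy⟩, hy⟩
    rw [h1] at this
    rw [(Submodule.mem_bot S).1 this]; simp
  rw [eq_bot_iff]
  intro y hy
  have : i y ∈ Submodule.map i N := ⟨y, hy, rfl⟩
  rw [h2] at this
  exact hi (by rw [map_zero]; exact this)

theorem hom_std_costd_has {l m : Λ} (u : Q.std l →ₗ[S] Y) (hu : u ≠ 0) : Has Q l Y := by
  obtain ⟨q, hq, -⟩ := std_ex Q l
  refine ⟨u ∘ₗ q, fun h => hu ?_⟩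
  ext y
  obtain ⟨x, rfl⟩ := hq y
  exact LinearMap.congr_fun h x

theorem hom_std_has {l : Λ} (u : Q.std l →ₗ[S] Y) (hu : u ≠ 0) : Has Q l Y :=
  hom_std_costd_has Q (m := l) u hu

theorem costd_soc (l : Λ) : ∃ s : Q.L l →ₗ[S] Q.costd l, Function.Injective s ∧
    (∀ N : Submodule S (Q.costd l), N ≠ ⊥ → LinearMap.range s ≤ N) ∧
    ∀ m, Has Q m (Q.costd l ⧸ LinearMap.range s) → m < l := by
  obtain ⟨s, hs, hN⟩ := costd_soc0 Q l
  refine ⟨s, hs, hN, fun m hm => ?_⟩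
  refine lt_of_le_of_ne (has_costd_le (hm.surj _ (Submodule.mkQ_surjective _))) ?_
  rintro rfl
  obtain ⟨a, ha⟩ := hm
  obtain ⟨a', ha'⟩ := Module.projective_lifting_property _ a (Submodule.mkQ_surjective _)
  obtain ⟨R, π, hR, hRf⟩ := proj_ses Q m
  have h0 : a' ∘ₗ R.subtype = 0 := by
    refine hom_filt_zero hRf (fun ν u => ?_) _
    by_contra hu
    exact absurd (has_costd_le (hom_std_has Q u hu)) ν.2.not_ge
  obtain ⟨β, hβ⟩ := factor_surj π hR.surj a' (fun x hx => by
    obtain ⟨y, rfl⟩ := (hR.exact x).1 hx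
    exact LinearMap.congr_fun h0 y)
  obtain ⟨t, ht, -, htk⟩ := std_top Q m
  have hk : Submodule.map β (LinearMap.ker t) = ⊥ := by
    by_contra hne
    have h1 := hN _ hne
    have h2 : Has Q m (Submodule.map β (LinearMap.ker t)) :=
      (hasL Q m).inj (s.codRestrict _ (fun x => h1 ⟨x, rfl⟩)) (fun x y h =>
        hs (congrArg Subtype.val h))
    have h3 : Has Q m (LinearMap.ker t) :=
      h2.surj ((β ∘ₗ (LinearMap.ker t).subtype).codRestrict
        (Submodule.map β (LinearMap.ker t)) (fun x => ⟨x, x.2, rfl⟩)) (by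
        rintro ⟨_, x, hx, rfl⟩
        exact ⟨⟨x, hx⟩, rfl⟩)
    exact lt_irrefl _ (htk m h3)
  obtain ⟨γ, hγ⟩ := factor_surj t ht β (fun x hx => by
    have : β x ∈ Submodule.map β (LinearMap.ker t) := ⟨x, hx, rfl⟩
    rw [hk] at this
    exact this)
  apply ha
  have hγr : LinearMap.range γ ≤ LinearMap.range s := by
    by_cases hγ0 : γ = 0
    · rw [hγ0, LinearMap.range_zero]; exact bot_le
    have hγi := LinearMap.injective_of_ne_zero hγ0
    have hat : IsAtom (LinearMap.range γ) := by
      rw [← isSimpleModule_iff_isAtom]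
      exact IsSimpleModule.congr (LinearEquiv.ofInjective γ hγi).symm
    have h1 := hN _ hat.1
    rcases hat.le_iff.1 h1 with h | h
    · exfalso
      obtain ⟨y, hy⟩ := exists_ne (0 : Q.L m)
      have : s y ∈ (⊥ : Submodule S _) := by rw [← h]; exact ⟨y, rfl⟩
      exact hy (hs (by rw [map_zero]; exact this))
    · rw [h]
  rw [← ha', ← hβ, ← hγ]
  ext x
  simp only [LinearMap.comp_apply, Submodule.mkQ_apply, LinearMap.zero_apply,
    Submodule.Quotient.mk_eq_zero]
  exact hγr ⟨_, rfl⟩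

theorem hom_std_costd {l m : Λ} (h : l ≠ m) (u : Q.std l →ₗ[S] Q.costd m) : u = 0 := by
  by_contra hu
  apply h
  apply le_antisymm (has_costd_le (hom_std_has Q u hu))
  obtain ⟨s, hs, hN⟩ := costd_soc0 Q m
  have h1 := hN (LinearMap.range u) (fun h => hu (LinearMap.range_eq_bot.1 h))
  have h2 : Has Q m (LinearMap.range u) :=
    (hasL Q m).inj (s.codRestrict _ (fun x => h1 ⟨x, rfl⟩)) (fun x y h =>
        hs (congrArg Subtype.val h))
  exact has_std_le (h2.surj u.rangeRestrict u.surjective_rangeRestrict)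

theorem ev_std_costd_one (l m : Λ) : EV S (Q.std l) (Q.costd m) 1 := by
  by_cases hlm : l ≤ m
  · obtain ⟨i, hi, hle, hu⟩ := costd_ex Q m
    refine EV.of_hom_zero' (SES.of_inj i hi) (EV.inj 0) fun u => ?_
    let W := Submodule.comap (LinearMap.range i).mkQ (LinearMap.range u)
    have hW : W ≤ LinearMap.range i := by
      refine hu W fun n hn => ?_
      let p : W →ₗ[S] LinearMap.range u :=
        ((LinearMap.range i).mkQ ∘ₗ W.subtype).codRestrict _ (fun x => x.2)
      have hp : Function.Surjective p := by
        rintro ⟨y, hy⟩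
        obtain ⟨x, rfl⟩ := Submodule.mkQ_surjective _ y
        exact ⟨⟨x, hy⟩, rfl⟩
      rcases hn.ses (SES.of_surj p hp) with h | h
      · obtain ⟨v, hv⟩ := factor_inj i hi (W.subtype ∘ₗ (LinearMap.ker p).subtype) (fun x => by
          have := x.2
          rw [LinearMap.mem_ker] at this
          have := congrArg Subtype.val this
          exact (Submodule.Quotient.mk_eq_zero _).1 this)
        refine hle n (h.inj v ?_)
        apply Function.Injective.of_comp (f := i)
        have : ⇑i ∘ ⇑v = ⇑(W.subtype ∘ₗ (LinearMap.ker p).subtype) := congrArg DFunLike.coe hv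
        rw [this]
        exact W.injective_subtype.comp (Submodule.injective_subtype _)
      · exact (has_std_le (h.surj u.rangeRestrict u.surjective_rangeRestrict)).trans hlm
    ext x
    obtain ⟨y, hy⟩ := Submodule.mkQ_surjective _ (u x)
    have : y ∈ W := ⟨x, hy.symm⟩
    rw [← hy]
    simpa using hW this
  · obtain ⟨R, π, hR, hRf⟩ := proj_ses Q l
    refine EV.of_hom_zero hR (EV.proj 0) (hom_filt_zero hRf fun ν u => ?_)
    by_contra hu
    exact hlm (ν.2.le.trans (has_costd_le (hom_std_has Q u hu)))

theorem ev_filt_left {I : Type} {D : I → ModuleCat.{0} S} (hM : Filt D M) {n : ℕ}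
    (h : ∀ i, EV S (D i) Y n) : EV S M Y n := by
  refine Filt.induct (D := D) (C := fun M _ _ => EV S M Y n) ?_ ?_ hM
  · intro M _ _ _
    exact EV.subsing_left n
  · intro M _ _ N _ _ i j π hs _ ih
    exact EV.con2 hs ih (h i)

theorem ev_filt_right {I : Type} {D : I → ModuleCat.{0} S} (hM : Filt D Y) {n : ℕ}
    (h : ∀ i, EV S M (D i) n) : EV S M Y n := by
  refine Filt.induct (D := D) (C := fun Y _ _ => EV S M Y n) ?_ ?_ hM
  · intro M _ _ _
    exact EV.subsing_right n
  · intro M _ _ N _ _ i j π hs _ ih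
    exact EV.cov2 hs ih (h i)

theorem ev_std_costd (n : ℕ) : ∀ (l m : Λ), EV S (Q.std l) (Q.costd m) (n+1) := by
  induction n with
  | zero => exact ev_std_costd_one Q
  | succ n ih =>
    intro l m
    obtain ⟨R, π, hR, hRf⟩ := proj_ses Q l
    exact EV.con3 hR (ev_filt_left hRf fun ν => ih ν m) (EV.proj _)

end QH2

section QH3

variable {S : Type} [Ring S] [FDA S] {Λ : Type} [Fintype Λ] [PartialOrder Λ] (Q : QHData S Λ)
variable {A B C M N X Y : Type} [AddCommGroup A] [Module S A] [AddCommGroup B] [Module S B]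
  [AddCommGroup C] [Module S C] [AddCommGroup M] [Module S M] [AddCommGroup N] [Module S N]
  [AddCommGroup X] [Module S X] [AddCommGroup Y] [Module S Y]

instance instFinCostd (l : Λ) : Module.Finite S (Q.costd l) := by
  obtain ⟨s, hs, hN⟩ := costd_soc0 Q l
  obtain ⟨I, _, _, i, hI, hI2, hi⟩ := FDA.emb (S := S) (Q.L l)
  obtain ⟨h, hh⟩ := hI2.out s hs i
  refine Module.Finite.of_injective h ?_
  rw [← LinearMap.ker_eq_bot]
  by_contra hne
  obtain ⟨y, hy⟩ := exists_ne (0 : Q.L l)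
  have h1 := hN _ hne ⟨y, rfl⟩
  rw [LinearMap.mem_ker, hh] at h1
  exact hy (hi (by rw [h1, map_zero]))

theorem costd_ne (l : Λ) : Nontrivial (Q.costd l) := by
  obtain ⟨s, hs, -⟩ := costd_soc0 Q l
  exact hs.nontrivial

theorem sub_simple [Module.Finite S X] (u : N →ₗ[S] X) (hu : u ≠ 0) :
    ∃ ν, Has Q ν N ∧ ∃ v : Q.L ν →ₗ[S] X, v ≠ 0 := by
  obtain ⟨N', hN', hs⟩ := exists_simple_sub (LinearMap.range u)
    (fun h => hu (LinearMap.range_eq_bot.1 h))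
  obtain ⟨ν, ⟨e⟩⟩ := Q.fullL (ModuleCat.of S N') hs
  refine ⟨ν, ?_, N'.subtype ∘ₗ e.symm.toLinearMap, fun h => ?_⟩
  · have h1 : Has Q ν N' := (hasL Q ν).inj e.symm.toLinearMap e.symm.injective
    exact (h1.inj (Submodule.inclusion hN') (Submodule.inclusion_injective hN')).surj
      u.rangeRestrict u.surjective_rangeRestrict
  · obtain ⟨y, hy⟩ := exists_ne (0 : Q.L ν)
    have := LinearMap.congr_fun h y
    simp only [LinearMap.comp_apply, LinearEquiv.coe_coe, LinearMap.zero_apply,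
      Submodule.subtype_apply] at this
    apply hy
    apply e.symm.injective
    rw [map_zero]
    exact Subtype.ext this

theorem quot_simple [Module.Finite S N] (u : N →ₗ[S] X) (hu : u ≠ 0) :
    ∃ ν, Has Q ν X ∧ ∃ v : N →ₗ[S] Q.L ν, v ≠ 0 := by
  have : Nontrivial (LinearMap.range u) := by
    rw [Submodule.nontrivial_iff_ne_bot]
    exact fun h => hu (LinearMap.range_eq_bot.1 h)
  obtain ⟨K, hK⟩ := exists_simple_quot (S := S) (B := LinearMap.range u)
  obtain ⟨ν, ⟨e⟩⟩ := Q.fullL (ModuleCat.of S (LinearMap.range u ⧸ K)) hK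
  have hsur : Function.Surjective (e.toLinearMap ∘ₗ K.mkQ) :=
    e.surjective.comp K.mkQ_surjective
  refine ⟨ν, ?_, (e.toLinearMap ∘ₗ K.mkQ) ∘ₗ u.rangeRestrict, fun h => ?_⟩
  · exact ((hasL Q ν).surj _ hsur).inj _ (Submodule.injective_subtype _)
  · obtain ⟨y, hy⟩ := exists_ne (0 : Q.L ν)
    obtain ⟨x, rfl⟩ := (hsur.comp u.surjective_rangeRestrict) y
    exact hy (LinearMap.congr_fun h x)

/-- devissage -/
theorem devis {C : ∀ (M : Type) [AddCommGroup M] [Module S M], Prop}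
    (nil : ∀ (M : Type) [AddCommGroup M] [Module S M], Subsingleton M → C M)
    (cons : ∀ (M : Type) [AddCommGroup M] [Module S M] (N : Type) [AddCommGroup N] [Module S N]
      (ν : Λ) (j : N →ₗ[S] M) (π : M →ₗ[S] Q.L ν), SES j π → C N → C M)
    {M : Type} [AddCommGroup M] [Module S M] [Module.Finite S M]  : C M := by
  induction h : ln S M using Nat.strong_induction_on generalizing M with
  | _ n ih =>
  subst h
  rcases subsingleton_or_nontrivial M with h | h
  · exact nil M h
  · obtain ⟨K, hK⟩ := exists_simple_quot (S := S) (B := M)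
    obtain ⟨ν, ⟨e⟩⟩ := Q.fullL (ModuleCat.of S (M ⧸ K)) hK
    have hs : SES K.subtype (e.toLinearMap ∘ₗ K.mkQ) :=
      ⟨K.injective_subtype, e.surjective.comp K.mkQ_surjective, by
        rw [LinearMap.exact_iff]; ext x; simp⟩
    refine cons M K ν _ _ hs (ih _ ?_ rfl)
    rw [hs.ln]
    have : 0 < ln S (Q.L ν) := ln_pos
    omega

theorem devis_has {C : ∀ (M : Type) [AddCommGroup M] [Module S M], Prop}
    (nil : ∀ (M : Type) [AddCommGroup M] [Module S M], Subsingleton M → C M)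
    (cons : ∀ (M : Type) [AddCommGroup M] [Module S M] (N : Type) [AddCommGroup N] [Module S N]
      (ν : Λ) (j : N →ₗ[S] M) (π : M →ₗ[S] Q.L ν), SES j π → C N → C (Q.L ν) → C M)
    {M : Type} [AddCommGroup M] [Module S M] [Module.Finite S M]
    (h : ∀ ν, Has Q ν M → C (Q.L ν)) : C M := by
  refine devis Q (C := fun M _ _ => (∀ ν, Has Q ν M → C (Q.L ν)) → C M) ?_ ?_ (M := M) h
  · intro M _ _ h _; exact nil M h
  · intro M _ _ N _ _ ν j π hs ih h
    exact cons M N ν j π hs (ih fun ν' h' => h ν' (h'.inj j hs.inj))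
      (h ν ((hasL Q ν).surj π hs.surj))

theorem ev_devis_left [Module.Finite S M] {n : ℕ} (h : ∀ ν, Has Q ν M → EV S (Q.L ν) X n) :
    EV S M X n :=
  devis_has Q (C := fun M _ _ => EV S M X n) (fun _ _ _ _ => EV.subsing_left n)
    (fun _ _ _ _ _ _ _ _ _ hs h1 h2 => EV.con2 hs h1 h2) h

theorem ev_devis_right [Module.Finite S M] {n : ℕ} (h : ∀ ν, Has Q ν M → EV S X (Q.L ν) n) :
    EV S X M n :=
  devis_has Q (C := fun M _ _ => EV S X M n) (fun _ _ _ _ => EV.subsing_right n)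
    (fun _ _ _ _ _ _ _ _ _ hs h1 h2 => EV.cov2 hs h1 h2) h

/-- good modules -/
def Fn (X : Type) [AddCommGroup X] [Module S X] : Prop :=
  Module.Finite S X ∧ ∀ l, EV S (Q.std l) X 1

/-- Weyl modules -/
def Fd (X : Type) [AddCommGroup X] [Module S X] : Prop :=
  Module.Finite S X ∧ ∀ l, EV S X (Q.costd l) 1

theorem exists_min_of (p : Λ → Prop) (h : ∃ l, p l) : ∃ l, p l ∧ ∀ m, m < l → ¬ p m := by
  obtain ⟨l, hl⟩ := (Set.toFinite {l | p l}).exists_minimal h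
  exact ⟨l, hl.1, fun m hm hp => (hl.2 hp hm.le).not_gt hm⟩

variable {Q}

theorem Fn.bottom (hX : Fn Q X) [Nontrivial X] : ∃ (l : Λ) (i : Q.costd l →ₗ[S] X),
    Function.Injective i ∧ Fn Q (X ⧸ LinearMap.range i) := by
  obtain ⟨hf, hE⟩ := hX
  -- nonzero maps from simples give nonzero maps from standards
  have hLS : ∀ ν, (∃ v : Q.L ν →ₗ[S] X, v ≠ 0) → ∃ u : Q.std ν →ₗ[S] X, u ≠ 0 := by
    rintro ν ⟨v, hv⟩
    obtain ⟨t, ht, -⟩ := std_top Q ν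
    refine ⟨v ∘ₗ t, fun h => hv (LinearMap.ext fun y => ?_)⟩
    obtain ⟨x, rfl⟩ := ht y
    exact LinearMap.congr_fun h x
  obtain ⟨l, ⟨u, hu⟩, hmin⟩ := exists_min_of (fun ν => ∃ u : Q.std ν →ₗ[S] X, u ≠ 0) (by
    obtain ⟨ν, -, hν⟩ := sub_simple Q (LinearMap.id : X →ₗ[S] X) (by
      intro h
      obtain ⟨x, hx⟩ := exists_ne (0 : X)
      exact hx (LinearMap.congr_fun h x))
    exact ⟨ν, hLS ν hν⟩)
  have hz : ∀ (N : Type) [AddCommGroup N] [Module S N], (∀ ν, Has Q ν N → ν < l) →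
      ∀ u : N →ₗ[S] X, u = 0 := by
    intro N _ _ hN u
    by_contra hu
    obtain ⟨ν, h1, h2⟩ := sub_simple Q u hu
    exact hmin ν (hN ν h1) (hLS ν h2)
  obtain ⟨t, ht, -, htk⟩ := std_top Q l
  obtain ⟨u', hu'⟩ := factor_surj t ht u (fun x hx =>
    LinearMap.congr_fun (hz _ htk (u ∘ₗ (LinearMap.ker t).subtype)) ⟨x, hx⟩)
  have hu'0 : u' ≠ 0 := by rintro rfl; exact hu (by rw [← hu', LinearMap.zero_comp])
  obtain ⟨s, hs, hN, hsq⟩ := costd_soc Q l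
  have hEV : EV S (Q.costd l ⧸ LinearMap.range s) X 1 := by
    refine ev_devis_left Q fun ν hν => ?_
    obtain ⟨t, ht, -, htk⟩ := std_top Q ν
    exact EV.of_hom_zero (SES.of_surj t ht) (hE ν)
      (hz _ fun m hm => (htk m hm).trans (hsq ν hν))
  obtain ⟨v, hv⟩ := EV.extend (SES.of_inj s hs) hEV u'
  have hvi : Function.Injective v := by
    rw [← LinearMap.ker_eq_bot]
    by_contra hne
    apply hu'0
    rw [← hv]
    ext y
    exact hN _ hne ⟨y, rfl⟩
  refine ⟨l, v, hvi, inferInstance, fun m => ?_⟩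
  exact EV.cov3 (SES.of_inj v hvi) (hE m) (ev_std_costd Q 1 m l)

theorem Fd.top (hX : Fd Q X) [Nontrivial X] : ∃ (l : Λ) (p : X →ₗ[S] Q.std l),
    Function.Surjective p ∧ Fd Q (LinearMap.ker p) := by
  obtain ⟨hf, hE⟩ := hX
  have hLS : ∀ ν, (∃ v : X →ₗ[S] Q.L ν, v ≠ 0) → ∃ u : X →ₗ[S] Q.costd ν, u ≠ 0 := by
    rintro ν ⟨v, hv⟩
    obtain ⟨s, hs, -⟩ := costd_soc0 Q ν
    refine ⟨s ∘ₗ v, fun h => hv (LinearMap.ext fun y => hs ?_)⟩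
    rw [LinearMap.zero_apply, map_zero]
    exact LinearMap.congr_fun h y
  obtain ⟨l, ⟨u, hu⟩, hmin⟩ := exists_min_of (fun ν => ∃ u : X →ₗ[S] Q.costd ν, u ≠ 0) (by
    obtain ⟨ν, -, hν⟩ := quot_simple Q (LinearMap.id : X →ₗ[S] X) (by
      intro h
      obtain ⟨x, hx⟩ := exists_ne (0 : X)
      exact hx (LinearMap.congr_fun h x))
    exact ⟨ν, hLS ν hν⟩)
  have hz : ∀ (N : Type) [AddCommGroup N] [Module S N], (∀ ν, Has Q ν N → ν < l) →
      ∀ u : X →ₗ[S] N, u = 0 := by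
    intro N _ _ hN u
    by_contra hu
    obtain ⟨ν, h1, h2⟩ := quot_simple Q u hu
    exact hmin ν (hN ν h1) (hLS ν h2)
  obtain ⟨s, hs, -, hsq⟩ := costd_soc Q l
  obtain ⟨u', hu'⟩ := factor_inj s hs u (fun x => by
    have := LinearMap.congr_fun (hz _ hsq ((LinearMap.range s).mkQ ∘ₗ u)) x
    simpa using this)
  have hu'0 : u' ≠ 0 := by rintro rfl; exact hu (by rw [← hu', LinearMap.comp_zero])
  obtain ⟨t, ht, hts, htk⟩ := std_top Q l
  have hEV : EV S X (LinearMap.ker t) 1 := by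
    refine ev_devis_right Q fun ν hν => ?_
    obtain ⟨s, hs, -, hsq⟩ := costd_soc Q ν
    exact EV.of_hom_zero' (SES.of_inj s hs) (hE ν)
      (hz _ fun m hm => (hsq m hm).trans (htk ν hν))
  obtain ⟨v, hv⟩ := EV.lift (SES.of_surj t ht) hEV u'
  have hvi : Function.Surjective v := by
    rw [← LinearMap.range_eq_top]
    apply hts
    rw [eq_top_iff]
    intro y _
    obtain ⟨x, hx⟩ := LinearMap.surjective_of_ne_zero hu'0 (t y)
    rw [← hv] at hx
    rw [← add_sub_cancel (v x) y]
    refine Submodule.add_mem_sup ⟨x, rfl⟩ ?_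
    rw [LinearMap.mem_ker, map_sub, ← hx]; simp
  refine ⟨l, v, hvi, inferInstance, fun m => ?_⟩
  exact EV.con1 (SES.of_surj v hvi) (hE m) (ev_std_costd Q 1 l m)

theorem Fn.filt (hX : Fn Q X) : Filt Q.costd X := by
  induction h : ln S X using Nat.strong_induction_on generalizing X with
  | _ n ih =>
  subst h
  rcases subsingleton_or_nontrivial X with h | h
  · exact Filt.nil
  · have := hX.1
    obtain ⟨l, i, hi, hq⟩ := hX.bottom
    refine Filt.bot_cons (LinearEquiv.refl S (Q.costd l)) (SES.of_inj i hi) (ih _ ?_ hq rfl)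
    rw [(SES.of_inj i hi).ln]
    have := costd_ne Q l
    have : 0 < ln S (Q.costd l) := ln_pos
    omega

theorem Fd.filt (hX : Fd Q X) : Filt Q.std X := by
  induction h : ln S X using Nat.strong_induction_on generalizing X with
  | _ n ih =>
  subst h
  rcases subsingleton_or_nontrivial X with h | h
  · exact Filt.nil
  · have := hX.1
    obtain ⟨l, i, hi, hq⟩ := hX.top
    refine Filt.top_cons (SES.of_surj i hi) (ih _ ?_ hq rfl)
    rw [(SES.of_surj i hi).ln]
    have := std_ne Q l
    have : 0 < ln S (Q.std l) := ln_pos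
    omega

theorem finite_filt {I : Type} {D : I → ModuleCat.{0} S} (hX : Filt D X)
    (h : ∀ i, Module.Finite S (D i)) : Module.Finite S X := by
  refine Filt.induct (D := D) (C := fun X _ _ => Module.Finite S X) ?_ ?_ hX
  · intro M _ _ _; infer_instance
  · intro M _ _ N _ _ i j π hs _ ih
    have := h i
    exact hs.finite_mid

theorem Fn.of_filt (hX : Filt Q.costd X) : Fn Q X :=
  ⟨finite_filt hX inferInstance, fun l => ev_filt_right hX fun m => ev_std_costd_one Q l m⟩

theorem Fd.of_filt (hX : Filt Q.std X) : Fd Q X :=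
  ⟨finite_filt hX inferInstance, fun l => ev_filt_left hX fun m => ev_std_costd_one Q m l⟩

theorem Fd.ev (hM : Fd Q M) (hX : Fn Q X) (n : ℕ) : EV S M X (n+1) :=
  ev_filt_left hM.filt fun l => ev_filt_right hX.filt fun m => ev_std_costd Q n l m

variable (Q) in
theorem fd_std (l : Λ) : Fd Q (Q.std l) := ⟨inferInstance, fun m => ev_std_costd_one Q l m⟩
variable (Q) in
theorem fn_costd (l : Λ) : Fn Q (Q.costd l) := ⟨inferInstance, fun m => ev_std_costd_one Q m l⟩

theorem Fn.top (hX : Fn Q X) [Nontrivial X] : ∃ (l : Λ) (p : X →ₗ[S] Q.costd l),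
    Function.Surjective p ∧ Fn Q (LinearMap.ker p) := by
  refine Filt.induct (D := Q.costd) (C := fun X _ _ => Nontrivial X → ∃ (l : Λ) (p : X →ₗ[S] Q.costd l),
    Function.Surjective p ∧ Fn Q (LinearMap.ker p)) ?_ ?_ hX.filt inferInstance
  · intro M _ _ h1 h2
    exact absurd h1 (not_subsingleton_iff_nontrivial.2 h2)
  · intro M _ _ N _ _ l j π hs hN _ _
    have h1 := Fn.of_filt hN
    let e := LinearEquiv.ofInjective j hs.inj
    have := h1.1
    refine ⟨l, π, hs.surj, ?_⟩
    rw [hs.exact.linearMap_ker_eq]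
    exact ⟨Module.Finite.of_surjective e.toLinearMap e.surjective,
      fun m => (h1.2 m).congr_right e.symm⟩

end QH3

end QHProof


namespace QHProof

set_option linter.all false

open QHPaper

section Splice

variable {S : Type} [Ring S]

theorem splice {d : ℕ} {N : Fin (d + 2) → ModuleCat.{0} S}
    {f : ∀ i : Fin (d + 1), ↥(N i.castSucc) →ₗ[S] ↥(N i.succ)} (h : IsExactSeq S d N f)
    {A B : ModuleCat.{0} S} {i : A →ₗ[S] B} {g : B →ₗ[S] N 0} (hs : SES i g) :
    ∃ (N' : Fin (d + 1 + 2) → ModuleCat.{0} S)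
      (f' : ∀ i : Fin (d + 1 + 1), ↥(N' i.castSucc) →ₗ[S] ↥(N' i.succ)),
      IsExactSeq S (d+1) N' f' ∧ N' 0 = A ∧ N' (Fin.succ 0) = B ∧
        ∀ j : Fin (d+1), N' j.succ.succ = N j.succ := by
  obtain ⟨h1, h2, h3⟩ := h
  obtain ⟨g, hs⟩ : ∃ g' : B →ₗ[S] N (Fin.castSucc 0), SES i g' := ⟨g, hs⟩
  let N' : Fin (d + 1 + 2) → ModuleCat.{0} S :=
    fun x => Fin.cases (motive := fun _ => ModuleCat.{0} S) A
      (fun y => Fin.cases (motive := fun _ => ModuleCat.{0} S) B (fun j => N j.succ) y) x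
  let f' : ∀ i : Fin (d + 1 + 1), ↥(N' i.castSucc) →ₗ[S] ↥(N' i.succ) := fun x =>
    Fin.cases (motive := fun i => ↥(N' i.castSucc) →ₗ[S] ↥(N' i.succ)) i
      (fun y => Fin.cases (motive := fun i : Fin (d+1) => ↥(N' i.succ.castSucc) →ₗ[S] ↥(N' i.succ.succ))
        (f 0 ∘ₗ g) (fun j => f j.succ) y) x
  have e0 : LinearMap.range i = LinearMap.ker (f 0 ∘ₗ g) := by
    rw [← hs.exact.linearMap_ker_eq]
    ext x
    simp only [LinearMap.mem_ker, LinearMap.comp_apply]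
    exact ⟨fun h => by rw [h, map_zero], fun h => h1 (by rw [h, map_zero])⟩
  have er : LinearMap.range (f 0 ∘ₗ g) = LinearMap.range (f 0) := by
    rw [LinearMap.range_comp, LinearMap.range_eq_top.2 hs.surj, Submodule.map_top]
  refine ⟨N', f', ⟨hs.inj, ?_, ?_⟩, rfl, rfl, fun j => rfl⟩
  · cases d with
    | zero => exact h2.comp hs.surj
    | succ d => exact h2
  · intro x
    induction x using Fin.cases with
    | zero => exact e0
    | succ x =>
      cases d with
      | zero => exact x.elim0
      | succ d =>
        induction x using Fin.cases with
        | zero => exact er.trans (h3 0)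
        | succ x => exact h3 x.succ

end Splice

section Dim

variable {S : Type} [Ring S] [FDA S] {Λ : Type} [Fintype Λ] [PartialOrder Λ] (Q : QHData S Λ)
variable {A B C M N X Y : Type} [AddCommGroup A] [Module S A] [AddCommGroup B] [Module S B]
  [AddCommGroup C] [Module S C] [AddCommGroup M] [Module S M] [AddCommGroup N] [Module S N]
  [AddCommGroup X] [Module S X] [AddCommGroup Y] [Module S Y]

variable (S) in
/-- bounded projective dimension -/
def PDB (M : Type) [AddCommGroup M] [Module S M] : Prop :=
  ∃ N : ℕ, ∀ (Y : Type) [AddCommGroup Y] [Module S Y] (m : ℕ), N < m → EV S M Y m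

theorem PDB.mid {f : A →ₗ[S] B} {g : B →ₗ[S] C} (hs : SES f g) (hA : PDB S A) (hC : PDB S C) :
    PDB S B := by
  obtain ⟨a, ha⟩ := hA
  obtain ⟨c, hc⟩ := hC
  exact ⟨max a c, fun Y _ _ m hm => EV.con2 hs (ha Y m (by omega)) (hc Y m (by omega))⟩

theorem PDB.right {f : A →ₗ[S] B} {g : B →ₗ[S] C} (hs : SES f g) (hA : PDB S A) (hB : PDB S B) :
    PDB S C := by
  obtain ⟨a, ha⟩ := hA
  obtain ⟨c, hc⟩ := hB
  refine ⟨max a c + 1, fun Y _ _ m hm => ?_⟩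
  obtain ⟨m, rfl⟩ : ∃ m', m = m' + 1 := ⟨m - 1, by omega⟩
  exact EV.con3 hs (ha Y m (by omega)) (hc Y (m+1) (by omega))

theorem PDB.subsing [Subsingleton M] : PDB S M := ⟨0, fun Y _ _ m _ => EV.subsing_left m⟩

theorem PDB.proj [Module.Projective S M] : PDB S M := ⟨0, fun Y _ _ m h => by
  obtain ⟨m, rfl⟩ : ∃ m', m = m' + 1 := ⟨m - 1, by omega⟩
  exact EV.proj m⟩

theorem pdb_std (l : Λ) : PDB S (Q.std l) := by
  have : WellFoundedGT Λ := inferInstance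
  induction l using this.wf.induction with
  | _ l ih =>
  obtain ⟨R, π, hR, hRf⟩ := proj_ses Q l
  refine PDB.right hR ?_ PDB.proj
  refine Filt.induct (C := fun M _ _ => PDB S M) ?_ ?_ hRf
  · intro M _ _ _; exact PDB.subsing
  · intro M _ _ N _ _ ν j π hs _ h
    exact PDB.mid hs h (ih ν ν.2)

theorem pdb_L (l : Λ) : PDB S (Q.L l) := by
  have : WellFoundedLT Λ := inferInstance
  induction l using this.wf.induction with
  | _ l ih =>
  obtain ⟨t, ht, -, htk⟩ := std_top Q l
  refine PDB.right (SES.of_surj t ht) ?_ (pdb_std Q l)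
  refine devis_has Q (C := fun M _ _ => PDB S M) ?_ ?_ (fun ν hν => ih ν (htk ν hν))
  · intro M _ _ _; exact PDB.subsing
  · intro M _ _ N _ _ ν j π hs h1 h2
    exact PDB.mid hs h1 h2

theorem gldim_fin {S : Type} [Ring S] [FDA S] {Λ : Type} [Fintype Λ] [PartialOrder Λ]
    (Q : QHData S Λ) : ∃ N : ℕ, ∀ (M Y : Type) [AddCommGroup M] [Module S M] [AddCommGroup Y]
    [Module S Y] [Module.Finite S M] (m : ℕ), N < m → EV S M Y m := by
  choose b hb using pdb_L Q
  refine ⟨Finset.univ.sup b, fun M Y _ _ _ _ _ m hm => ?_⟩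
  exact ev_devis_left Q fun ν _ => hb ν Y m (lt_of_le_of_lt (Finset.le_sup (Finset.mem_univ ν)) hm)

theorem Fn.of_inj [Module.Finite S X] [Module.Injective S X] : Fn Q X :=
  ⟨inferInstance, fun _ => EV.inj 0⟩

theorem Fd.of_proj [Module.Finite S X] [Module.Projective S X] : Fd Q X :=
  ⟨inferInstance, fun _ => EV.proj 0⟩

theorem gfdLE_of_ev (d : ℕ) : ∀ (M : ModuleCat.{0} S) [Module.Finite S M],
    (∀ l, EV S (Q.std l) M (d+1)) → GfdLE S Q M d := by
  induction d with
  | zero =>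
    intro M hf hM
    refine ⟨fun _ => M, fun _ => LinearMap.id, ⟨fun _ _ h => h, fun x => ⟨x, rfl⟩,
      fun i => i.elim0⟩, rfl, fun _ => ?_⟩
    exact Fn.filt (Q := Q) ⟨hf, hM⟩
  | succ d ih =>
    intro M hf hM
    obtain ⟨I, _, _, i, hI, hI2, hi⟩ := FDA.emb (S := S) M
    have hs := SES.of_inj i hi
    obtain ⟨N, f, hN, hN0, hNf⟩ := ih (ModuleCat.of S (I ⧸ LinearMap.range i)) (fun l =>
      EV.cov3 hs (EV.inj d) (hM l))
    have hg : ∃ g : I →ₗ[S] N 0, SES i g := by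
      rw [hN0]; exact ⟨_, hs⟩
    obtain ⟨g, hg⟩ := hg
    obtain ⟨N', f', h1, h2, h3, h4⟩ := splice hN (A := M) (B := ModuleCat.of S I) hg
    refine ⟨N', f', h1, h2, fun x => ?_⟩
    induction x using Fin.cases with
    | zero => rw [h3]; exact Fn.filt (Q := Q) (Fn.of_inj Q)
    | succ x => rw [h4]; exact hNf x

theorem ev_of_gfdLE {d : ℕ} {M : ModuleCat.{0} S} (h : GfdLE S Q M d) (l : Λ) (m : ℕ)
    (hm : d ≤ m) : EV S (Q.std l) M (m+1) := by
  obtain ⟨N, f, ⟨h1, h2, h3⟩, rfl, hN⟩ := h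
  have key : ∀ i : Fin (d+1), ∀ m : ℕ, d ≤ m + i → EV S (Q.std l) (LinearMap.range (f i)) (m+1) := by
    intro i
    induction i using Fin.reverseInduction with
    | last =>
      intro m _
      rw [LinearMap.range_eq_top.2 h2]
      exact ((fd_std Q l).ev (Fn.of_filt (hN (Fin.last d))) m).congr_right Submodule.topEquiv
    | cast i ih =>
      intro m hm
      cases m with
      | zero => simp at hm; omega
      | succ m =>
        have hs : SES (LinearMap.range (f i.castSucc)).subtype ((f i.succ).rangeRestrict) := by
          rw [h3 i]
          refine ⟨Submodule.injective_subtype _, LinearMap.surjective_rangeRestrict _, ?_⟩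
          rw [LinearMap.exact_iff, LinearMap.ker_rangeRestrict, Submodule.range_subtype]
        refine EV.cov1 hs (ih m ?_) ((fd_std Q l).ev (Fn.of_filt (hN i.castSucc)) _)
        simp at hm ⊢; omega
  exact (key 0 m (by simpa using hm)).congr_right (LinearEquiv.ofInjective _ h1)

theorem ev_of_wfdLE {d : ℕ} {M : ModuleCat.{0} S} (h : WfdLE S Q M d) (l : Λ) (m : ℕ)
    (hm : d ≤ m) : EV S M (Q.costd l) (m+1) := by
  obtain ⟨N, f, ⟨h1, h2, h3⟩, rfl, hN⟩ := h
  have key : ∀ i : Fin (d+1), ∀ m : ℕ, (i : ℕ) ≤ m →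
      EV S (LinearMap.range (f i)) (Q.costd l) (m+1) := by
    intro i
    induction i using Fin.induction with
    | zero =>
      intro m _
      exact ((Fd.of_filt (hN 0)).ev (fn_costd Q l) m).congr_left (LinearEquiv.ofInjective _ h1).symm
    | succ i ih =>
      intro m hm
      cases m with
      | zero => simp at hm
      | succ m =>
        have hs : SES (LinearMap.range (f i.castSucc)).subtype ((f i.succ).rangeRestrict) := by
          rw [h3 i]
          refine ⟨Submodule.injective_subtype _, LinearMap.surjective_rangeRestrict _, ?_⟩
          rw [LinearMap.exact_iff, LinearMap.ker_rangeRestrict, Submodule.range_subtype]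
        refine EV.con3 hs (ih m ?_) ((Fd.of_filt (hN i.succ)).ev (fn_costd Q l) _)
        simp at hm ⊢; omega
  have := key (Fin.last d) m (by simpa using hm)
  rw [LinearMap.range_eq_top.2 h2] at this
  exact this.congr_left Submodule.topEquiv.symm

theorem partial_res (M : ModuleCat.{0} S) [Module.Finite S M] (d : ℕ) :
    ∃ (N : Fin (d + 2) → ModuleCat.{0} S)
    (f : ∀ i : Fin (d + 1), ↥(N i.castSucc) →ₗ[S] ↥(N i.succ)),
    IsExactSeq S d N f ∧ N (Fin.last (d + 1)) = M ∧
    (∀ i : Fin d, Fd Q (N i.succ.castSucc)) ∧ Module.Finite S (N 0) ∧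
    ∀ e l, EV S M (Q.costd l) (d + e + 1) → EV S (N 0) (Q.costd l) (e+1) := by
  induction d with
  | zero =>
    refine ⟨fun _ => M, fun _ => LinearMap.id, ⟨fun _ _ h => h, fun x => ⟨x, rfl⟩,
      fun i => i.elim0⟩, rfl, fun i => i.elim0, inferInstance, fun e l h => by simpa using h⟩
  | succ d ih =>
    obtain ⟨N, f, hN, hNl, hNf, hfin, hE⟩ := ih
    obtain ⟨n, p, hp⟩ := Module.Finite.exists_fin' S (N 0)
    have hs := SES.of_surj p hp
    obtain ⟨N', f', h1, h2, h3, h4⟩ := splice hN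
      (A := ModuleCat.of S (LinearMap.ker p)) (B := ModuleCat.of S (Fin n → S)) hs
    refine ⟨N', f', h1, ?_, ?_, ?_, ?_⟩
    · rw [← hNl]; exact h4 (Fin.last d)
    · intro i
      induction i using Fin.cases with
      | zero =>
        have : N' (Fin.castSucc (Fin.succ 0)) = ModuleCat.of S (Fin n → S) := h3
        rw [this]; exact Fd.of_proj Q
      | succ i =>
        have := h4 i.castSucc
        have h5 : N' (Fin.castSucc (Fin.succ i.succ)) = N i.succ.castSucc := this
        rw [h5]; exact hNf i
    · rw [h2]; change Module.Finite S (LinearMap.ker p); infer_instance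
    · intro e l h
      rw [h2]
      refine EV.con1 hs (EV.proj e) (hE (e+1) l ?_)
      have : d + (e + 1) + 1 = d + 1 + e + 1 := by omega
      rw [this]; exact h

theorem wfdLE_of_ev (d : ℕ) (M : ModuleCat.{0} S) [Module.Finite S M]
    (h : ∀ l, EV S M (Q.costd l) (d+1)) : WfdLE S Q M d := by
  obtain ⟨N, f, hN, hNl, hNf, hfin, hE⟩ := partial_res Q M d
  refine ⟨N, f, hN, hNl, fun i => ?_⟩
  induction i using Fin.cases with
  | zero => exact Fd.filt (Q := Q) ⟨hfin, fun l => hE 0 l (h l)⟩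
  | succ i => exact Fd.filt (hNf i)

theorem gfdAlg_le_iff (n : ℕ) : gfdAlg S Q ≤ n ↔
    ∀ (M : Type) [AddCommGroup M] [Module S M] [Module.Finite S M] (l : Λ) (m : ℕ), n ≤ m →
      EV S (Q.std l) M (m+1) := by
  obtain ⟨b, hb⟩ := gldim_fin Q
  have hle : ∀ M : ModuleCat.{0} S, Module.Finite S M → GfdLE S Q M b := fun M _ =>
    gfdLE_of_ev Q b M fun l => hb _ _ _ (by omega)
  have hbdd : BddAbove {d | ∃ M : ModuleCat.{0} S, Module.Finite S ↥M ∧ gfd S Q M = d} :=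
    ⟨b, by rintro _ ⟨M, hM, rfl⟩; exact Nat.sInf_le (hle M hM)⟩
  constructor
  · intro h M _ _ _ l m hm
    have h1 : gfd S Q (ModuleCat.of S M) ≤ n :=
      (le_csSup hbdd ⟨ModuleCat.of S M, ‹Module.Finite S M›, rfl⟩).trans h
    have h2 : GfdLE S Q (ModuleCat.of S M) (gfd S Q (ModuleCat.of S M)) :=
      Nat.sInf_mem (s := {d | GfdLE S Q (ModuleCat.of S M) d}) ⟨b, hle (ModuleCat.of S M) ‹_›⟩
    exact ev_of_gfdLE Q h2 l m (h1.trans hm)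
  · intro h
    refine csSup_le' ?_
    rintro _ ⟨M, hM, rfl⟩
    exact Nat.sInf_le (gfdLE_of_ev Q n M fun l => h M l n le_rfl)

theorem wfdAlg_le_iff (n : ℕ) : wfdAlg S Q ≤ n ↔
    ∀ (M : Type) [AddCommGroup M] [Module S M] [Module.Finite S M] (l : Λ) (m : ℕ), n ≤ m →
      EV S M (Q.costd l) (m+1) := by
  obtain ⟨b, hb⟩ := gldim_fin Q
  have hle : ∀ M : ModuleCat.{0} S, Module.Finite S M → WfdLE S Q M b := fun M _ =>
    wfdLE_of_ev Q b M fun l => hb _ _ _ (by omega)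
  have hbdd : BddAbove {d | ∃ M : ModuleCat.{0} S, Module.Finite S ↥M ∧ wfd S Q M = d} :=
    ⟨b, by rintro _ ⟨M, hM, rfl⟩; exact Nat.sInf_le (hle M hM)⟩
  constructor
  · intro h M _ _ _ l m hm
    have h1 : wfd S Q (ModuleCat.of S M) ≤ n :=
      (le_csSup hbdd ⟨ModuleCat.of S M, ‹Module.Finite S M›, rfl⟩).trans h
    have h2 : WfdLE S Q (ModuleCat.of S M) (wfd S Q (ModuleCat.of S M)) :=
      Nat.sInf_mem (s := {d | WfdLE S Q (ModuleCat.of S M) d}) ⟨b, hle (ModuleCat.of S M) ‹_›⟩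
    exact ev_of_wfdLE Q h2 l m (h1.trans hm)
  · intro h
    refine csSup_le' ?_
    rintro _ ⟨M, hM, rfl⟩
    exact Nat.sInf_le (wfdLE_of_ev Q n M fun l => h M l n le_rfl)

theorem wfdAlg_le_iff' (n : ℕ) : wfdAlg S Q ≤ n ↔
    ∀ (l l' : Λ) (m : ℕ), n ≤ m → EV S (Q.costd l) (Q.costd l') (m+1) := by
  rw [wfdAlg_le_iff]
  constructor
  · intro h l l' m hm; exact h _ l' m hm
  · intro h
    obtain ⟨b, hb⟩ := gldim_fin Q
    have key : ∀ j m, n ≤ m → b ≤ m + j → ∀ (M : Type) [AddCommGroup M] [Module S M]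
        [Module.Finite S M] (l : Λ), EV S M (Q.costd l) (m+1) := by
      intro j
      induction j with
      | zero => intro m _ hm M _ _ _ l; exact hb _ _ _ (by omega)
      | succ j ih =>
        intro m hm hj M _ _ _ l
        obtain ⟨I, _, _, i, hI, hI2, hi⟩ := FDA.emb (S := S) M
        exact EV.con1 (SES.of_inj i hi)
          (ev_filt_left (Fn.of_inj Q).filt fun l' => h l' l m hm)
          (ih (m+1) (by omega) (by omega) _ l)
    intro M _ _ _ l m hm
    exact key b m hm (by omega) M l

theorem gfdAlg_le_iff' (n : ℕ) : gfdAlg S Q ≤ n ↔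
    ∀ (l l' : Λ) (m : ℕ), n ≤ m → EV S (Q.std l) (Q.std l') (m+1) := by
  rw [gfdAlg_le_iff]
  constructor
  · intro h l l' m hm; exact h _ l m hm
  · intro h
    obtain ⟨b, hb⟩ := gldim_fin Q
    have key : ∀ j m, n ≤ m → b ≤ m + j → ∀ (M : Type) [AddCommGroup M] [Module S M]
        [Module.Finite S M] (l : Λ), EV S (Q.std l) M (m+1) := by
      intro j
      induction j with
      | zero => intro m _ hm M _ _ _ l; exact hb _ _ _ (by omega)
      | succ j ih =>
        intro m hm hj M _ _ _ l
        obtain ⟨r, p, hp⟩ := Module.Finite.exists_fin' S M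
        exact EV.cov3 (SES.of_surj p hp)
          (ev_filt_right (Fd.of_proj Q).filt fun l' => h l l' m hm)
          (ih (m+1) (by omega) (by omega) _ l)
    intro M _ _ _ l m hm
    exact key b m hm (by omega) M l

end Dim

end QHProof


namespace QHProof

set_option linter.all false

open QHPaper

section Covers

variable {S : Type} [Ring S] [FDA S] {Λ : Type} [Fintype Λ] [PartialOrder Λ] {Q : QHData S Λ}
variable {A B C M N X Y T : Type} [AddCommGroup A] [Module S A] [AddCommGroup B] [Module S B]
  [AddCommGroup C] [Module S C] [AddCommGroup M] [Module S M] [AddCommGroup N] [Module S N]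
  [AddCommGroup X] [Module S X] [AddCommGroup Y] [Module S Y] [AddCommGroup T] [Module S T]

theorem Fn.congr (h : Fn Q B) (e : A ≃ₗ[S] B) : Fn Q A := by
  have := h.1
  exact ⟨Module.Finite.equiv e.symm, fun l => (h.2 l).congr_right e⟩

theorem Fd.congr (h : Fd Q B) (e : A ≃ₗ[S] B) : Fd Q A := by
  have := h.1
  exact ⟨Module.Finite.equiv e.symm, fun l => (h.2 l).congr_left e⟩

theorem Fn.subsing [Subsingleton A] : Fn Q A := ⟨inferInstance, fun l => EV.subsing_right 1⟩
theorem Fd.subsing [Subsingleton A] : Fd Q A := ⟨inferInstance, fun l => EV.subsing_left 1⟩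

theorem Fn.pi {ι : Type} [Fintype ι] (h : Fn Q A) : Fn Q (ι → A) := by
  have := h.1
  exact ⟨inferInstance, fun l => (h.2 l).pi⟩

theorem Fd.pi {ι : Type} [Fintype ι] (h : Fd Q A) : Fd Q (ι → A) := by
  have := h.1
  exact ⟨inferInstance, fun l => (h.2 l).pi_left⟩

theorem Fn.mid {f : A →ₗ[S] B} {g : B →ₗ[S] C} (h : SES f g) (hA : Fn Q A) (hC : Fn Q C) :
    Fn Q B := by
  have := hA.1
  have := hC.1
  exact ⟨h.finite_mid, fun l => EV.cov2 h (hA.2 l) (hC.2 l)⟩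

theorem Fd.mid {f : A →ₗ[S] B} {g : B →ₗ[S] C} (h : SES f g) (hA : Fd Q A) (hC : Fd Q C) :
    Fd Q B := by
  have := hA.1
  have := hC.1
  exact ⟨h.finite_mid, fun l => EV.con2 h (hA.2 l) (hC.2 l)⟩

theorem SES.eqv {A' : Type} [AddCommGroup A'] [Module S A'] {f : A →ₗ[S] B} {f' : A' →ₗ[S] B}
    {g : B →ₗ[S] C} (h : SES f g) (h' : SES f' g) : Nonempty (A ≃ₗ[S] A') :=
  ⟨(LinearEquiv.ofInjective f h.inj).trans ((LinearEquiv.ofEq _ _ (by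
    rw [← h.exact.linearMap_ker_eq, h'.exact.linearMap_ker_eq])).trans
    (LinearEquiv.ofInjective f' h'.inj).symm)⟩

variable (Q T) in
/-- a tilting module with covers of all costandard modules -/
structure Tilt : Prop where
  fn : Fn Q T
  fd : Fd Q T
  cov : ∀ l, ∃ h : T →ₗ[S] Q.costd l, Function.Surjective h ∧ Fn Q (LinearMap.ker h)

theorem Tilt.cover (hT : Tilt Q T) (hX : Fn Q X) : ∃ (ι : Type) (_ : Fintype ι)
    (p : (ι → T) →ₗ[S] X), Function.Surjective p ∧ Fn Q (LinearMap.ker p) := by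
  induction h : ln S X using Nat.strong_induction_on generalizing X with
  | _ n ih =>
  subst h
  rcases subsingleton_or_nontrivial X with hs | hs
  · exact ⟨Fin 0, inferInstance, 0, fun x => ⟨0, Subsingleton.elim _ _⟩, Fn.subsing⟩
  · have := hX.1
    obtain ⟨l, i, hi, hY⟩ := hX.bottom
    have hse := SES.of_inj i hi
    have hlt : ln S (X ⧸ LinearMap.range i) < ln S X := by
      have := hse.ln
      have h2 : Nontrivial (Q.costd l) := costd_ne Q l
      have := ln_pos (S := S) (B := Q.costd l)
      omega
    obtain ⟨κ, _, q, hq, hqk⟩ := ih _ hlt hY rfl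
    obtain ⟨v, hv⟩ := EV.lift hse (hT.fd.pi.2 l) q
    obtain ⟨h, hh, hhk⟩ := hT.cov l
    let a : ((Unit ⊕ κ) → T) →ₗ[S] T := LinearMap.proj (Sum.inl ())
    let b : ((Unit ⊕ κ) → T) →ₗ[S] (κ → T) := LinearMap.funLeft S T Sum.inr
    let p : ((Unit ⊕ κ) → T) →ₗ[S] X := i ∘ₗ h ∘ₗ a + v ∘ₗ b
    have hp : Function.Surjective p := by
      intro x
      obtain ⟨f, hf⟩ := hq ((LinearMap.range i).mkQ x)
      have h1 : x - v f ∈ LinearMap.range i := by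
        rw [← Submodule.ker_mkQ (LinearMap.range i), LinearMap.mem_ker, map_sub, ← hf, ← hv]
        simp
      obtain ⟨y, hy⟩ := h1
      obtain ⟨t, rfl⟩ := hh y
      refine ⟨Sum.elim (fun _ => t) f, ?_⟩
      show i (h t) + v f = x
      rw [hy]; abel
    have hfT := hT.fn.1
    refine ⟨Unit ⊕ κ, inferInstance, p, hp, inferInstance, fun m => ?_⟩
    refine EV.of_lift (SES.of_surj p hp) (hT.fn.pi.2 m) fun u => ?_
    obtain ⟨c, hc⟩ := EV.lift (SES.of_surj q hq) (hqk.2 m) ((LinearMap.range i).mkQ ∘ₗ u)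
    obtain ⟨w, hw⟩ := factor_inj i hi (u - v ∘ₗ c) (fun x => by
      rw [← Submodule.ker_mkQ (LinearMap.range i), LinearMap.mem_ker]
      have h1 := LinearMap.congr_fun hc x
      have h2 := LinearMap.congr_fun hv (c x)
      simp only [LinearMap.comp_apply] at h1 h2
      rw [LinearMap.sub_apply, map_sub, LinearMap.comp_apply, h2, h1, sub_self])
    obtain ⟨z, hz⟩ := EV.lift (SES.of_surj h hh) (hhk.2 m) w
    refine ⟨LinearMap.pi (fun s => Sum.elim (fun _ => z) (fun k => LinearMap.proj k ∘ₗ c) s), ?_⟩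
    ext x
    have h1 := LinearMap.congr_fun hw x
    have h2 := LinearMap.congr_fun hz x
    simp only [LinearMap.comp_apply] at h1 h2
    show i (h (z x)) + v (c x) = u x
    rw [h2, h1]
    simp

theorem Tilt.sc_of_sp (hT : Tilt Q T) (j : C →ₗ[S] Y) (hj : Function.Injective j) (hY : Fn Q Y)
    (hc : Fd Q (Y ⧸ LinearMap.range j)) : ∃ (Z : Type) (_ : AddCommGroup Z) (_ : Module S Z)
    (p : Z →ₗ[S] C), Function.Surjective p ∧ Fd Q Z ∧ Fn Q (LinearMap.ker p) := by
  obtain ⟨ι, _, p, hp, hpk⟩ := hT.cover hY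
  have hfT := hT.fn.1
  let Z := (LinearMap.range j).comap p
  obtain ⟨v, hv⟩ := factor_inj j hj (p ∘ₗ Z.subtype) (fun x => x.2)
  have hv' : ∀ z : Z, j (v z) = p z := fun z => LinearMap.congr_fun hv z
  have hvs : Function.Surjective v := by
    intro c
    obtain ⟨t, ht⟩ := hp (j c)
    refine ⟨⟨t, c, ht.symm⟩, hj ?_⟩
    rw [hv', ht]
  refine ⟨Z, inferInstance, inferInstance, v, hvs, ⟨inferInstance, fun l => ?_⟩, ?_⟩
  · have hs : SES Z.subtype ((LinearMap.range j).mkQ ∘ₗ p) :=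
      ⟨Submodule.injective_subtype _, (Submodule.mkQ_surjective _).comp hp, by
        rw [LinearMap.exact_iff, LinearMap.ker_comp, Submodule.ker_mkQ, Submodule.range_subtype]⟩
    exact EV.con1 hs (hT.fd.pi.2 l) (hc.ev (fn_costd Q l) 1)
  · let f : LinearMap.ker p →ₗ[S] Z := Submodule.inclusion (fun x hx => ⟨0, by
      rw [map_zero]; exact (LinearMap.mem_ker.1 hx).symm⟩)
    have hs : SES f v := ⟨Submodule.inclusion_injective _, hvs, fun z => by
      constructor
      · intro h
        refine ⟨⟨z.1, ?_⟩, rfl⟩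
        rw [LinearMap.mem_ker, ← hv', h, map_zero]
      · rintro ⟨y, rfl⟩
        apply hj
        rw [hv', map_zero]; exact y.2⟩
    obtain ⟨e⟩ := (SES.of_surj v hvs).eqv hs
    exact hpk.congr e

theorem sp_of_sc {I Z : Type} [AddCommGroup I] [Module S I] [AddCommGroup Z] [Module S Z]
    (i : C →ₗ[S] I) (hi : Function.Injective i) (hI : Fn Q I)
    (p : Z →ₗ[S] (I ⧸ LinearMap.range i)) (hp : Function.Surjective p) (hZ : Fd Q Z)
    (hk : Fn Q (LinearMap.ker p)) : ∃ (Y : Type) (_ : AddCommGroup Y) (_ : Module S Y)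
    (j : C →ₗ[S] Y), Function.Injective j ∧ Fn Q Y ∧ Fd Q (Y ⧸ LinearMap.range j) := by
  let π := (LinearMap.range i).mkQ
  let Y := LinearMap.eqLocus (π ∘ₗ LinearMap.fst S I Z) (p ∘ₗ LinearMap.snd S I Z)
  have hY : ∀ y : I × Z, y ∈ Y ↔ π y.1 = p y.2 := fun y => Iff.rfl
  have hπ : ∀ c, π (i c) = 0 := fun c => by
    rw [← LinearMap.mem_ker, Submodule.ker_mkQ]; exact ⟨c, rfl⟩
  let j : C →ₗ[S] Y := (LinearMap.inl S I Z ∘ₗ i).codRestrict Y (fun c => by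
    rw [hY]; simp [hπ])
  let a : LinearMap.ker p →ₗ[S] Y := (LinearMap.inr S I Z ∘ₗ (LinearMap.ker p).subtype).codRestrict Y
    (fun c => by rw [hY]; simp)
  have h1 : SES a (LinearMap.fst S I Z ∘ₗ Y.subtype) := by
    refine ⟨fun x y h => ?_, fun x => ?_, fun y => ⟨fun h => ?_, ?_⟩⟩
    · have := congrArg (fun y : Y => y.1.2) h
      exact Subtype.ext this
    · obtain ⟨z, hz⟩ := hp (π x)
      exact ⟨⟨(x, z), hz.symm⟩, rfl⟩
    · have h2 : y.1.1 = 0 := h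
      refine ⟨⟨y.1.2, ?_⟩, Subtype.ext (Prod.ext h2.symm rfl)⟩
      rw [LinearMap.mem_ker, ← (hY _).1 y.2, h2, map_zero]
    · rintro ⟨y, rfl⟩; rfl
  have h2 : SES j (LinearMap.snd S I Z ∘ₗ Y.subtype) := by
    refine ⟨fun x y h => ?_, fun z => ?_, fun y => ⟨fun h => ?_, ?_⟩⟩
    · have := congrArg (fun y : Y => y.1.1) h
      exact hi this
    · obtain ⟨x, hx⟩ := Submodule.mkQ_surjective _ (p z)
      exact ⟨⟨(x, z), hx⟩, rfl⟩
    · have h2 : y.1.2 = 0 := h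
      have h3 : π y.1.1 = 0 := by rw [(hY _).1 y.2, h2, map_zero]
      rw [← LinearMap.mem_ker, Submodule.ker_mkQ] at h3
      obtain ⟨c, hc⟩ := h3
      exact ⟨c, Subtype.ext (Prod.ext hc h2.symm)⟩
    · rintro ⟨y, rfl⟩; rfl
  refine ⟨Y, inferInstance, inferInstance, j, h2.inj, Fn.mid h1 hk hI, ?_⟩
  refine hZ.congr ((Submodule.quotEquivOfEq _ _ h2.exact.linearMap_ker_eq.symm).trans
    (LinearMap.quotKerEquivOfSurjective _ h2.surj))

theorem Tilt.sp (hT : Tilt Q T) (d : ℕ) : ∀ (C : Type) [AddCommGroup C] [Module S C]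
    [Module.Finite S C], (∀ l, EV S (Q.std l) C (d+1)) →
    ∃ (Y : Type) (_ : AddCommGroup Y) (_ : Module S Y)
    (j : C →ₗ[S] Y), Function.Injective j ∧ Fn Q Y ∧ Fd Q (Y ⧸ LinearMap.range j) := by
  induction d with
  | zero =>
    intro C _ _ _ hC
    refine ⟨C, inferInstance, inferInstance, LinearMap.id, fun _ _ h => h, ⟨inferInstance, hC⟩, ?_⟩
    have : Subsingleton (C ⧸ LinearMap.range (LinearMap.id : C →ₗ[S] C)) := by
      rw [Submodule.Quotient.subsingleton_iff, LinearMap.range_id]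
    exact Fd.subsing
  | succ d ih =>
    intro C _ _ _ hC
    obtain ⟨I, _, _, i, hI, hI2, hi⟩ := FDA.emb (S := S) C
    obtain ⟨Y, _, _, j, hj, hY, hYj⟩ := ih (I ⧸ LinearMap.range i) fun l =>
      EV.cov3 (SES.of_inj i hi) (EV.inj d) (hC l)
    obtain ⟨Z, _, _, p, hp, hZ, hk⟩ := hT.sc_of_sp j hj hY hYj
    exact sp_of_sc i hi (Fn.of_inj Q) p hp hZ hk

theorem Tilt.env (hT : Tilt Q T) (hX : Fd Q X) : ∃ (ι : Type) (_ : Fintype ι)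
    (j : X →ₗ[S] (ι → T)), Function.Injective j ∧ Fd Q ((ι → T) ⧸ LinearMap.range j) := by
  obtain ⟨b, hb⟩ := gldim_fin Q
  have := hX.1
  have hfT := hT.fn.1
  obtain ⟨W, _, _, j, hj, hW, hWj⟩ := hT.sp b X fun l => hb _ _ _ (by omega)
  have hWd : Fd Q W := Fd.mid (SES.of_inj j hj) hX hWj
  obtain ⟨ι, _, p, hp, hpk⟩ := hT.cover hW
  obtain ⟨s, hs⟩ := EV.lift (SES.of_surj p hp) (hWd.ev hpk 0) LinearMap.id
  have hsi : Function.Injective (s ∘ₗ j) := by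
    intro x y h
    have h1 := congrArg p h
    have h2 := fun x => LinearMap.congr_fun hs (j x)
    simp only [LinearMap.comp_apply, LinearMap.id_apply] at h1 h2
    rw [h2, h2] at h1
    exact hj h1
  refine ⟨ι, inferInstance, s ∘ₗ j, hsi, inferInstance, fun l => ?_⟩
  refine EV.of_extend (SES.of_inj _ hsi) (hT.fd.pi.2 l) fun u => ?_
  obtain ⟨v, hv⟩ := EV.extend (SES.of_inj j hj) (hWj.2 l) u
  refine ⟨v ∘ₗ p, ?_⟩
  rw [← hv]
  ext x
  have h2 := LinearMap.congr_fun hs (j x)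
  simp only [LinearMap.comp_apply, LinearMap.id_apply] at h2 ⊢
  rw [h2]

end Covers

end QHProof


namespace QHProof

set_option linter.all false

open QHPaper

section HTsec

variable {S : Type} [Ring S] 
variable {A B C M N X Y T : Type} [AddCommGroup A] [Module S A] [AddCommGroup B] [Module S B]
  [AddCommGroup C] [Module S C] [AddCommGroup M] [Module S M] [AddCommGroup N] [Module S N]
  [AddCommGroup X] [Module S X] [AddCommGroup Y] [Module S Y] [AddCommGroup T] [Module S T]

/-- the functor `Hom_S(T,-)` -/
def HT (S T X : Type) [Ring S] [AddCommGroup X] [Module S X] [AddCommGroup T] [Module S T] : Type :=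
  T →ₗ[S] X

instance : AddCommGroup (HT S T X) := inferInstanceAs (AddCommGroup (T →ₗ[S] X))

/-- underlying map -/
def HT.hom (f : HT S T X) : T →ₗ[S] X := f

/-- wrap a map -/
def HT.mk (f : T →ₗ[S] X) : HT S T X := f

instance : Module (Module.End S T)ᵐᵒᵖ (HT S T X) where
  smul a f := HT.mk (f.hom ∘ₗ a.unop)
  one_smul φ := rfl
  mul_smul a b φ := rfl
  smul_zero a := rfl
  smul_add a φ ψ := rfl
  add_smul a b φ := LinearMap.ext fun x => map_add φ.hom _ _
  zero_smul φ := LinearMap.ext fun x => map_zero φ.hom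

theorem HT.smul_def (a : (Module.End S T)ᵐᵒᵖ) (f : HT S T X) : a • f = HT.mk (f.hom ∘ₗ a.unop) := rfl

variable (T) in
/-- functoriality -/
def HT.map (g : X →ₗ[S] Y) : HT S T X →ₗ[(Module.End S T)ᵐᵒᵖ] HT S T Y where
  toFun f := HT.mk (g ∘ₗ f.hom)
  map_add' f f' := LinearMap.comp_add _ _ _
  map_smul' a f := rfl

theorem HT.map_apply (g : X →ₗ[S] Y) (f : HT S T X) : HT.map T g f = HT.mk (g ∘ₗ f.hom) := rfl

theorem HT.ses {f : A →ₗ[S] B} {g : B →ₗ[S] C} (h : SES f g) (hA : EV S T A 1) :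
    SES (HT.map T f) (HT.map T g) := by
  refine ⟨fun x y hxy => LinearMap.ext fun t => h.inj (LinearMap.congr_fun hxy t), fun u => ?_,
    fun y => ⟨fun hy => ?_, ?_⟩⟩
  · exact EV.lift h hA u
  · obtain ⟨v, hv⟩ := factor_inj f h.inj (HT.hom y) (fun x => (h.exact _).1 (LinearMap.congr_fun hy x))
    exact ⟨v, hv⟩
  · rintro ⟨x, rfl⟩
    exact LinearMap.ext fun t => (h.exact _).2 ⟨_, rfl⟩

variable (S T) in
/-- `Hom(T,T^ι)` is free -/
def HT.pi (ι : Type) : HT S T (ι → T) ≃ₗ[(Module.End S T)ᵐᵒᵖ] (ι → (Module.End S T)ᵐᵒᵖ) where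
  toFun f i := MulOpposite.op (LinearMap.proj i ∘ₗ f.hom)
  invFun a := HT.mk (LinearMap.pi fun i => (a i).unop)
  map_add' f f' := rfl
  map_smul' a f := rfl
  left_inv f := rfl
  right_inv f := rfl

instance {ι : Type} [Fintype ι] : Module.Projective (Module.End S T)ᵐᵒᵖ (HT S T (ι → T)) :=
  Module.Projective.of_equiv (HT.pi S T ι).symm

instance {ι : Type} [Fintype ι] : Module.Finite (Module.End S T)ᵐᵒᵖ (HT S T (ι → T)) :=
  Module.Finite.equiv (HT.pi S T ι).symm

theorem pi_sum {ι : Type} [Fintype ι] [DecidableEq ι] (f : A →ₗ[S] (ι → T)) :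
    ∑ i, LinearMap.single S (fun _ : ι => T) i ∘ₗ LinearMap.proj i ∘ₗ f = f := by
  ext x j
  simp [Finset.sum_apply, Pi.single_apply]

theorem lcomp_sum {ι : Type} [Fintype ι] (g : B →ₗ[S] C) (f : ι → (A →ₗ[S] B)) :
    g ∘ₗ (∑ i, f i) = ∑ i, g ∘ₗ f i := by
  ext x; simp

/-- a family of maps `T → X` which kill every map factors -/
theorem sigma_zero {ι : Type} [Fintype ι] (e : (ι → T) →ₗ[S] X)
    (h : ∀ t : T →ₗ[S] (ι → T), e ∘ₗ t = 0) : e = 0 := by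
  classical
  have h1 := pi_sum (LinearMap.id : (ι → T) →ₗ[S] (ι → T))
  rw [← LinearMap.comp_id e, ← h1, lcomp_sum]
  refine Finset.sum_eq_zero fun i _ => ?_
  rw [← LinearMap.comp_assoc, h, LinearMap.zero_comp]

end HTsec

section Half2

variable {S : Type} [Ring S] [FDA S] {Λ : Type} [Fintype Λ] [PartialOrder Λ] {Q : QHData S Λ}
variable {A B C M N X Y T : Type} [AddCommGroup A] [Module S A] [AddCommGroup B] [Module S B]
  [AddCommGroup C] [Module S C] [AddCommGroup M] [Module S M] [AddCommGroup N] [Module S N]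
  [AddCommGroup X] [Module S X] [AddCommGroup Y] [Module S Y] [AddCommGroup T] [Module S T]

theorem Tilt.ht_finite (hT : Tilt Q T) (hX : Fn Q X) :
    Module.Finite (Module.End S T)ᵐᵒᵖ (HT S T X) := by
  obtain ⟨ι, _, p, hp, hpk⟩ := hT.cover hX
  exact Module.Finite.of_surjective _ (HT.ses (SES.of_surj p hp) (hT.fd.ev hpk 0)).surj

theorem Tilt.half2_base (hT : Tilt Q T) (hX : Fn Q X)
    (h : ∀ (M : Type) [AddCommGroup M] [Module (Module.End S T)ᵐᵒᵖ M]
      [Module.Finite (Module.End S T)ᵐᵒᵖ M], EV (Module.End S T)ᵐᵒᵖ (HT S T X) M 1) : Fd Q X := by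
  classical
  obtain ⟨ι, _, p, hp, hpk⟩ := hT.cover hX
  obtain ⟨κ, _, q, hq, hqk⟩ := hT.cover hpk
  have hs := HT.ses (SES.of_surj p hp) (hT.fd.ev hpk 0)
  have := hT.ht_finite hpk
  obtain ⟨σ, hσ⟩ := EV.lift hs (h _) LinearMap.id
  have hσ' : ∀ f : T →ₗ[S] X, p ∘ₗ (σ (HT.mk f)).hom = f := fun f => LinearMap.congr_fun hσ f
  have hσl : ∀ (f : T →ₗ[S] X) (a : Module.End S T), (σ (HT.mk f)).hom ∘ₗ a =
      (σ (HT.mk (f ∘ₗ a))).hom := fun f a => (map_smul σ (MulOpposite.op a) (HT.mk f)).symm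
  let e : (ι → T) →ₗ[S] (ι → T) :=
    ∑ i, (σ (HT.mk (p ∘ₗ LinearMap.single S (fun _ : ι => T) i))).hom ∘ₗ LinearMap.proj i
  have he : p ∘ₗ e = p := by
    have h1 := pi_sum (LinearMap.id : (ι → T) →ₗ[S] (ι → T))
    simp only [e]
    rw [lcomp_sum]
    conv_rhs => rw [← LinearMap.comp_id p, ← h1, lcomp_sum]
    refine Finset.sum_congr rfl fun i _ => ?_
    rw [← LinearMap.comp_assoc, hσ']
    rfl
  have het : ∀ t : T →ₗ[S] (ι → T), e ∘ₗ t = (σ (HT.mk (p ∘ₗ t))).hom := by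
    intro t
    have h1 : (HT.mk (p ∘ₗ t) : HT S T X) = ∑ i, HT.mk
        ((p ∘ₗ LinearMap.single S (fun _ : ι => T) i) ∘ₗ (LinearMap.proj i ∘ₗ t)) := by
      conv_lhs => rw [← pi_sum t, lcomp_sum]
      rfl
    rw [h1, map_sum]
    have h2 : e ∘ₗ t = ∑ i, (σ (HT.mk (p ∘ₗ LinearMap.single S (fun _ : ι => T) i))).hom ∘ₗ
        (LinearMap.proj i ∘ₗ t) := by
      ext x; simp [e]
    rw [h2]
    exact Finset.sum_congr rfl fun i _ => hσl _ _
  have hek : (e ∘ₗ (LinearMap.ker p).subtype) ∘ₗ q = 0 := by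
    refine sigma_zero _ fun t => ?_
    have h1 := het ((LinearMap.ker p).subtype ∘ₗ q ∘ₗ t)
    have h2 : p ∘ₗ (LinearMap.ker p).subtype ∘ₗ q ∘ₗ t = 0 := by
      ext x; exact (q (t x)).2
    rw [h2] at h1
    have h3 : (HT.mk (0 : T →ₗ[S] X) : HT S T X) = 0 := rfl
    rw [h3, map_zero] at h1
    exact h1
  obtain ⟨v, hv⟩ := factor_surj p hp e (fun x hx => by
    obtain ⟨y, hy⟩ := hq ⟨x, hx⟩
    have := LinearMap.congr_fun hek y
    simp only [LinearMap.comp_apply] at this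
    rw [hy] at this
    exact this)
  have hpv : p ∘ₗ v = LinearMap.id := by
    ext x
    obtain ⟨y, rfl⟩ := hp x
    have h1 := LinearMap.congr_fun hv y
    have h2 := LinearMap.congr_fun he y
    simp only [LinearMap.comp_apply, LinearMap.id_apply] at h1 h2 ⊢
    rw [h1, h2]
  exact ⟨hX.1, fun l => EV.retract_left hpv (hT.fd.pi.2 l)⟩

theorem Tilt.half2 (hT : Tilt Q T) (n : ℕ) : ∀ (X : Type) [AddCommGroup X] [Module S X], Fn Q X → 
    ((∀ (M : Type) [AddCommGroup M] [Module (Module.End S T)ᵐᵒᵖ M]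
      [Module.Finite (Module.End S T)ᵐᵒᵖ M], EV (Module.End S T)ᵐᵒᵖ (HT S T X) M (n+1)) ↔
      ∀ l, EV S X (Q.costd l) (n+1)) := by
  induction n with
  | zero =>
    intro X _ _ hX
    constructor
    · intro h
      exact (hT.half2_base hX h).2
    · intro h M _ _ _
      have hXd : Fd Q X := ⟨hX.1, h⟩
      obtain ⟨ι, _, p, hp, hpk⟩ := hT.cover hX
      obtain ⟨s, hs⟩ := EV.lift (SES.of_surj p hp) (hXd.ev hpk 0) LinearMap.id
      refine EV.retract_left (i := HT.map T s) (r := HT.map T p) ?_ (EV.proj 0)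
      ext f
      show HT.mk (p ∘ₗ s ∘ₗ f.hom) = f
      rw [← LinearMap.comp_assoc, hs]; rfl
  | succ n ih =>
    intro X _ _ hX
    obtain ⟨ι, _, p, hp, hpk⟩ := hT.cover hX
    have hs := SES.of_surj p hp
    have hs' := HT.ses hs (hT.fd.ev hpk 0)
    constructor
    · intro h l
      refine EV.con3 hs ((ih _ hpk).1 ?_ l) (hT.fd.pi.ev (fn_costd Q l) _)
      intro M _ _ _
      exact EV.con1 hs' (EV.proj n) (h M)
    · intro h M _ _ _
      refine EV.con3 hs' ((ih _ hpk).2 ?_ M) (EV.proj _)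
      intro l
      exact EV.con1 hs (hT.fd.pi.ev (fn_costd Q l) _) (h l)

/-- existence of the covers -/
theorem tilt_of_ringel [FDA (Module.End S T)ᵐᵒᵖ] (hn : Fn Q T) (hd : Fd Q T)
    (Q' : QHData (Module.End S T)ᵐᵒᵖ Λᵒᵈ)
    (he : ∀ l : Λ, Nonempty (Q'.std (OrderDual.toDual l) ≃ₗ[(Module.End S T)ᵐᵒᵖ]
      HT S T (Q.costd l))) : Tilt Q T := by
  refine ⟨hn, hd, fun l => ?_⟩
  have hfT := hn.1
  obtain ⟨y, hy⟩ := exists_ne (0 : Q'.L (OrderDual.toDual l))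
  obtain ⟨v, rfl⟩ := pr_surj Q' (OrderDual.toDual l) y
  have hv0 : v ≠ 0 := fun h => hy (by rw [h, map_zero])
  let a : (Module.End S T)ᵐᵒᵖ →ₗ[(Module.End S T)ᵐᵒᵖ] Q'.P (OrderDual.toDual l) :=
    LinearMap.toSpanSingleton _ _ v
  have ha : Function.Surjective a := by
    rw [← LinearMap.range_eq_top]
    apply pr_sup Q' (OrderDual.toDual l)
    apply (pr_coatom Q' (OrderDual.toDual l)).2
    refine lt_of_le_of_ne le_sup_right fun h => ?_
    have h1 : v ∈ LinearMap.ker (pr Q' (OrderDual.toDual l)) := by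
      rw [h]
      exact Submodule.mem_sup_left ⟨1, by simp [a]⟩
    exact hy h1
  obtain ⟨σ, hσ⟩ := Module.projective_lifting_property a LinearMap.id ha
  have hσv : σ v • v = v := LinearMap.congr_fun hσ v
  have hid : σ v * σ v = σ v := by
    have := map_smul σ (σ v) v
    rw [hσv] at this
    exact this.symm
  obtain ⟨ε, hε⟩ : ∃ ε : Module.End S T, ε = (σ v).unop := ⟨_, rfl⟩
  have hεε : ∀ x, ε (ε x) = ε x := by
    intro x
    have := congrArg MulOpposite.unop hid
    rw [MulOpposite.unop_mul, ← hε] at this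
    exact LinearMap.congr_fun this x
  have hε0 : ε ≠ 0 := by
    intro h
    apply hv0
    have : σ v = 0 := MulOpposite.unop_injective (by rw [← hε, h]; rfl)
    rw [← hσv, this, zero_smul]
  have hret : ε.rangeRestrict ∘ₗ (LinearMap.range ε).subtype = LinearMap.id := by
    ext ⟨_, x, rfl⟩
    exact hεε x
  have hT1 : Fn Q (LinearMap.range ε) := ⟨inferInstance, fun m => EV.retract_right hret (hn.2 m)⟩
  have hnt : Nontrivial (LinearMap.range ε) := by
    rw [Submodule.nontrivial_iff_ne_bot]
    exact fun h => hε0 (LinearMap.range_eq_bot.1 h)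
  obtain ⟨ν, π, hπ, hπk⟩ := hT1.top
  let h : T →ₗ[S] Q.costd ν := π ∘ₗ ε.rangeRestrict
  have hh : Function.Surjective h := hπ.comp (LinearMap.surjective_rangeRestrict ε)
  have hk : Fn Q (LinearMap.ker h) := by
    refine ⟨inferInstance, fun m => EV.of_lift (SES.of_surj h hh) (hn.2 m) fun u => ?_⟩
    obtain ⟨w, hw⟩ := EV.lift (SES.of_surj π hπ) (hπk.2 m) u
    refine ⟨(LinearMap.range ε).subtype ∘ₗ w, ?_⟩
    rw [← hw]
    show π ∘ₗ (ε.rangeRestrict ∘ₗ (LinearMap.range ε).subtype) ∘ₗ w = _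
    rw [hret]; rfl
  let b : Q'.P (OrderDual.toDual l) →ₗ[(Module.End S T)ᵐᵒᵖ] HT S T (Q.costd ν) :=
    LinearMap.toSpanSingleton _ _ (HT.mk h) ∘ₗ σ
  have hb : Function.Surjective b := by
    intro f
    obtain ⟨c, hc⟩ := EV.lift (SES.of_surj h hh) (hd.ev hk 0) (HT.hom f)
    refine ⟨MulOpposite.op c • v, ?_⟩
    have h1 : b v = HT.mk h := by
      show HT.mk (h ∘ₗ (σ v).unop) = _
      rw [← hε]
      refine LinearMap.ext fun x => ?_
      show π (ε.rangeRestrict (ε x)) = π (ε.rangeRestrict x)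
      congr 1
      exact Subtype.ext (hεε x)
    rw [map_smul, h1]
    exact hc
  obtain ⟨e⟩ := he ν
  obtain ⟨t, ht, -⟩ := std_top Q' (OrderDual.toDual ν)
  have hsurj : Function.Surjective (t ∘ₗ e.symm.toLinearMap ∘ₗ b) :=
    ht.comp (e.symm.surjective.comp hb)
  have hlν := eq_of_hom_L Q' (t ∘ₗ e.symm.toLinearMap ∘ₗ b) (fun h0 => by
    obtain ⟨y, hy⟩ := exists_ne (0 : Q'.L (OrderDual.toDual ν))
    obtain ⟨x, rfl⟩ := hsurj y
    rw [h0] at hy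
    exact hy rfl)
  have : l = ν := OrderDual.toDual.injective hlν
  subst this
  exact ⟨h, hh, hk⟩

theorem ringel_half2 [FDA (Module.End S T)ᵐᵒᵖ] (hT : Tilt Q T)
    (Q' : QHData (Module.End S T)ᵐᵒᵖ Λᵒᵈ)
    (he : ∀ l : Λ, Nonempty (Q'.std (OrderDual.toDual l) ≃ₗ[(Module.End S T)ᵐᵒᵖ]
      HT S T (Q.costd l))) (n : ℕ) :
    wfdAlg S Q ≤ n ↔ gfdAlg (Module.End S T)ᵐᵒᵖ Q' ≤ n := by
  rw [wfdAlg_le_iff', gfdAlg_le_iff]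
  constructor
  · intro h M _ _ _ l m hm
    obtain ⟨e⟩ := he (OrderDual.ofDual l)
    exact ((hT.half2 m _ (fn_costd Q (OrderDual.ofDual l))).2 (fun l' => h _ l' m hm) M).congr_left e
  · intro h l l' m hm
    obtain ⟨e⟩ := he l
    exact (hT.half2 m _ (fn_costd Q l)).1 (fun M _ _ _ => (h M _ m hm).congr_left e.symm) l'

end Half2

end QHProof


namespace QHProof

set_option linter.all false

open QHPaper

section GTsec

variable {k S : Type} [Field k] [Ring S] [Algebra k S]
variable {A B C M N X Y Z T : Type} [AddCommGroup A] [Module S A] [AddCommGroup B] [Module S B]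
  [AddCommGroup C] [Module S C] [AddCommGroup M] [Module S M] [AddCommGroup N] [Module S N]
  [AddCommGroup X] [Module S X] [AddCommGroup Y] [Module S Y] [AddCommGroup Z] [Module S Z]
  [AddCommGroup T] [Module S T] [Module k T] [IsScalarTower k S T]

/-- the functor `D Hom_S(-,T)` -/
def GT (k S T X : Type) [Field k] [Ring S] [Algebra k S] [AddCommGroup X] [Module S X]
    [AddCommGroup T] [Module S T] [Module k T] [IsScalarTower k S T] : Type :=
  (X →ₗ[S] T) →ₗ[k] k

instance : AddCommGroup (GT k S T X) := inferInstanceAs (AddCommGroup ((X →ₗ[S] T) →ₗ[k] k))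
instance : Module k (GT k S T X) := inferInstanceAs (Module k ((X →ₗ[S] T) →ₗ[k] k))

/-- underlying functional -/
def GT.fn (f : GT k S T X) : (X →ₗ[S] T) →ₗ[k] k := f

/-- wrap a functional -/
def GT.mk (f : (X →ₗ[S] T) →ₗ[k] k) : GT k S T X := f

theorem GT.ext {f g : GT k S T X} (h : ∀ x, f.fn x = g.fn x) : f = g := LinearMap.ext h

variable (k T) in
/-- precomposition as a `k`-linear map -/
def preC (g : X →ₗ[S] Y) : (Y →ₗ[S] T) →ₗ[k] (X →ₗ[S] T) where
  toFun h := h ∘ₗ g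
  map_add' _ _ := rfl
  map_smul' _ _ := rfl

variable (k X) in
/-- postcomposition as a `k`-linear map -/
def postC [Module k Y] [IsScalarTower k S Y] [Module k Z] [IsScalarTower k S Z]
    (g : Y →ₗ[S] Z) : (X →ₗ[S] Y) →ₗ[k] (X →ₗ[S] Z) where
  toFun h := g ∘ₗ h
  map_add' _ _ := LinearMap.comp_add _ _ _
  map_smul' c h := LinearMap.ext fun x => by
    show g (c • h x) = c • g (h x)
    rw [← algebraMap_smul S c (h x), map_smul, algebraMap_smul]

instance : Module (Module.End S T)ᵐᵒᵖ (GT k S T X) where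
  smul a f := GT.mk (f.fn ∘ₗ postC k X a.unop)
  one_smul φ := rfl
  mul_smul a b φ := rfl
  smul_zero a := rfl
  smul_add a φ ψ := rfl
  add_smul a b φ := LinearMap.ext fun x => by
    show φ.fn ((a.unop + b.unop) ∘ₗ x) = φ.fn (a.unop ∘ₗ x) + φ.fn (b.unop ∘ₗ x)
    rw [LinearMap.add_comp, map_add]
  zero_smul φ := LinearMap.ext fun x => by
    show φ.fn ((0 : Module.End S T) ∘ₗ x) = 0
    rw [LinearMap.zero_comp, map_zero]

theorem GT.smul_fn (a : (Module.End S T)ᵐᵒᵖ) (f : GT k S T X) (h : X →ₗ[S] T) :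
    (a • f).fn h = f.fn (a.unop ∘ₗ h) := rfl

instance : IsScalarTower k (Module.End S T)ᵐᵒᵖ (GT k S T X) where
  smul_assoc c a φ := LinearMap.ext fun x => by
    show φ.fn ((c • a.unop) ∘ₗ x) = c • φ.fn (a.unop ∘ₗ x)
    rw [← map_smul]; rfl

variable (k T) in
/-- functoriality -/
def GT.map (g : X →ₗ[S] Y) : GT k S T X →ₗ[(Module.End S T)ᵐᵒᵖ] GT k S T Y where
  toFun f := GT.mk (f.fn ∘ₗ preC k T g)
  map_add' f f' := rfl
  map_smul' a f := rfl

theorem GT.map_fn (g : X →ₗ[S] Y) (f : GT k S T X) (h : Y →ₗ[S] T) :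
    (GT.map k T g f).fn h = f.fn (h ∘ₗ g) := rfl

theorem GT.ses {f : A →ₗ[S] B} {g : B →ₗ[S] C} (h : SES f g) (hA : EV S C T 1) :
    SES (GT.map k T f) (GT.map k T g) := by
  refine ⟨fun x y hxy => GT.ext fun t => ?_, fun u => ?_, fun y => ⟨fun hy => ?_, ?_⟩⟩
  · obtain ⟨v, rfl⟩ := EV.extend h hA t
    exact LinearMap.congr_fun hxy v
  · have hi : Function.Injective (preC k T g) := by
      intro x y hxy
      ext c
      obtain ⟨b, rfl⟩ := h.surj c
      exact LinearMap.congr_fun hxy b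
    obtain ⟨r, hr⟩ := LinearMap.exists_leftInverse_of_injective (preC k T g)
      (LinearMap.ker_eq_bot.2 hi)
    refine ⟨GT.mk (u.fn ∘ₗ r), GT.ext fun t => ?_⟩
    show u.fn (r (preC k T g t)) = u.fn t
    rw [show r (preC k T g t) = t from LinearMap.congr_fun hr t]
  · have hs : Function.Surjective (preC k T f) := fun t => EV.extend h hA t
    obtain ⟨v, hv⟩ := factor_surj (preC k T f) hs y.fn (fun x hx => by
      obtain ⟨w, rfl⟩ := factor_surj g h.surj x (fun b hb => by
        obtain ⟨a, rfl⟩ := (h.exact b).1 hb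
        exact LinearMap.congr_fun hx a)
      exact LinearMap.congr_fun hy w)
    exact ⟨v, hv⟩
  · rintro ⟨x, rfl⟩
    refine GT.ext fun t => ?_
    show x.fn ((t ∘ₗ g) ∘ₗ f) = 0
    rw [LinearMap.comp_assoc, h.exact.linearMap_comp_eq_zero, LinearMap.comp_zero, map_zero]

theorem hom_fin [Module.Finite k T] [Module.Finite S X] : Module.Finite k (X →ₗ[S] T) := by
  obtain ⟨n, p, hp⟩ := Module.Finite.exists_fin' S X
  have h1 : Function.Injective (preC k T p) := by
    intro x y hxy
    ext c
    obtain ⟨b, rfl⟩ := hp c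
    exact LinearMap.congr_fun hxy b
  let q : ((Fin n → S) →ₗ[S] T) →ₗ[k] (Fin n → T) :=
    { toFun := fun f i => f (Pi.single i 1), map_add' := fun _ _ => rfl, map_smul' := fun _ _ => rfl }
  have h2 : Function.Injective q := by
    intro x y hxy
    refine LinearMap.pi_ext' fun i => LinearMap.ext_ring ?_
    exact congrFun hxy i
  exact Module.Finite.of_injective (q ∘ₗ preC k T p) (h2.comp h1)

theorem GT.finite [Module.Finite k T] [Module.Finite S X] :
    Module.Finite (Module.End S T)ᵐᵒᵖ (GT k S T X) := by
  have := hom_fin (k := k) (S := S) (T := T) (X := X)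
  have : Module.Finite k (GT k S T X) := inferInstanceAs (Module.Finite k ((X →ₗ[S] T) →ₗ[k] k))
  exact Module.Finite.of_restrictScalars_finite k (Module.End S T)ᵐᵒᵖ _

/-- `G(T^ι)` embeds as a retract of an injective -/
theorem GT.ev_pi {ι : Type} [Fintype ι] {M' : Type} [AddCommGroup M']
    [Module (Module.End S T)ᵐᵒᵖ M'] (n : ℕ) :
    EV (Module.End S T)ᵐᵒᵖ M' (GT k S T (ι → T)) (n+1) := by
  classical
  let i : GT k S T (ι → T) →ₗ[(Module.End S T)ᵐᵒᵖ] (ι → Coind k (Module.End S T)ᵐᵒᵖ k) :=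
    { toFun := fun φ i => 
        (φ.fn ∘ₗ preC k T (LinearMap.proj i : (ι → T) →ₗ[S] T) ∘ₗ
          (MulOpposite.opLinearEquiv k (M := Module.End S T)).symm.toLinearMap :
            (Module.End S T)ᵐᵒᵖ →ₗ[k] k)
      map_add' := fun _ _ => rfl
      map_smul' := fun _ _ => rfl }
  let r : (ι → Coind k (Module.End S T)ᵐᵒᵖ k) →ₗ[(Module.End S T)ᵐᵒᵖ] GT k S T (ι → T) :=
    { toFun := fun ψ => GT.mk (∑ i, (ψ i).ev ∘ₗ 
        (MulOpposite.opLinearEquiv k (M := Module.End S T)).toLinearMap ∘ₗ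
          preC k T (LinearMap.single S (fun _ : ι => T) i))
      map_add' := fun ψ ψ' => GT.ext fun h => by
        show (∑ i, ((ψ i).ev + (ψ' i).ev) ∘ₗ _ : _ →ₗ[k] k) h = 
          (∑ i, (ψ i).ev ∘ₗ _ : _ →ₗ[k] k) h + (∑ i, (ψ' i).ev ∘ₗ _ : _ →ₗ[k] k) h
        simp [Finset.sum_add_distrib]
      map_smul' := fun a ψ => GT.ext fun h => by
        show (∑ i, (a • ψ i).ev ∘ₗ _ : _ →ₗ[k] k) h = (∑ i, (ψ i).ev ∘ₗ _ : _ →ₗ[k] k) (a.unop ∘ₗ h)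
        rw [LinearMap.sum_apply, LinearMap.sum_apply]
        rfl }
  refine EV.retract_right (i := i) (r := r) ?_ (EV.inj n).pi
  refine LinearMap.ext fun φ => GT.ext fun h => ?_
  show (∑ i, _ : _ →ₗ[k] k) h = φ.fn h
  rw [LinearMap.sum_apply]
  have h2 : ∑ i, (h ∘ₗ LinearMap.single S (fun _ : ι => T) i) ∘ₗ LinearMap.proj i = h := by
    conv_rhs => rw [← LinearMap.comp_id h,
      ← pi_sum (LinearMap.id : (ι → T) →ₗ[S] (ι → T)), lcomp_sum]
    rfl
  conv_rhs => rw [← h2, map_sum]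
  rfl

end GTsec

section Half1

variable {k S : Type} [Field k] [Ring S] [Algebra k S] [FDA S]
  {Λ : Type} [Fintype Λ] [PartialOrder Λ] {Q : QHData S Λ}
variable {A B C M N X Y Z T : Type} [AddCommGroup A] [Module S A] [AddCommGroup B] [Module S B]
  [AddCommGroup C] [Module S C] [AddCommGroup M] [Module S M] [AddCommGroup N] [Module S N]
  [AddCommGroup X] [Module S X] [AddCommGroup Y] [Module S Y] [AddCommGroup Z] [Module S Z]
  [AddCommGroup T] [Module S T] [Module k T] [IsScalarTower k S T]

theorem Tilt.theta (hT : Tilt Q T) (hX : Fd Q X) (hZ : Fn Q Z) [Module k Z] [IsScalarTower k S Z]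
    (Φ : HT S T Z →ₗ[(Module.End S T)ᵐᵒᵖ] GT k S T X) :
    ∃ ψ : (X →ₗ[S] Z) →ₗ[k] k, ∀ (f : T →ₗ[S] Z) (g : X →ₗ[S] T),
      (Φ (HT.mk f)).fn g = ψ (f ∘ₗ g) := by
  classical
  obtain ⟨ι, _, p, hp, hpk⟩ := hT.cover hZ
  obtain ⟨κ, _, q, hq, hqk⟩ := hT.cover hpk
  let ψ0 : (X →ₗ[S] (ι → T)) →ₗ[k] k :=
    ∑ i, (Φ (HT.mk (p ∘ₗ LinearMap.single S (fun _ : ι => T) i))).fn ∘ₗ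
      postC k X (LinearMap.proj i : (ι → T) →ₗ[S] T)
  have h0 : ∀ (c : T →ₗ[S] (ι → T)) (w : X →ₗ[S] T), ψ0 (c ∘ₗ w) = (Φ (HT.mk (p ∘ₗ c))).fn w := by
    intro c w
    have h1 : (HT.mk (p ∘ₗ c) : HT S T Z) = ∑ i, MulOpposite.op (LinearMap.proj i ∘ₗ c) • HT.mk
        (p ∘ₗ LinearMap.single S (fun _ : ι => T) i) := by
      conv_lhs => rw [← pi_sum c, lcomp_sum]
      rfl
    rw [h1, map_sum]
    simp only [ψ0, LinearMap.sum_apply]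
    have h2 : ∀ F : ι → GT k S T X, (∑ i, F i).fn w = ∑ i, (F i).fn w := fun F =>
      LinearMap.sum_apply (R := k) _ _ _
    rw [h2]
    refine Finset.sum_congr rfl fun i _ => ?_
    rw [map_smul]
    rfl
  have hker : ∀ u : X →ₗ[S] (ι → T), postC k X p u = 0 → ψ0 u = 0 := by
    intro u hu
    obtain ⟨u', rfl⟩ := factor_inj (LinearMap.ker p).subtype (Submodule.injective_subtype _) u
      (fun x => by rw [Submodule.range_subtype]; exact LinearMap.congr_fun hu x)
    obtain ⟨w, rfl⟩ := EV.lift (SES.of_surj q hq) (hX.ev hqk 0) u'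
    have h1 : (LinearMap.ker p).subtype ∘ₗ q ∘ₗ w = ∑ j, ((LinearMap.ker p).subtype ∘ₗ q ∘ₗ
        LinearMap.single S (fun _ : κ => T) j) ∘ₗ (LinearMap.proj j ∘ₗ w) := by
      conv_lhs => rw [← pi_sum w, lcomp_sum, lcomp_sum]
      rfl
    rw [h1, map_sum]
    refine Finset.sum_eq_zero fun j _ => ?_
    rw [h0]
    have h2 : p ∘ₗ (LinearMap.ker p).subtype ∘ₗ q ∘ₗ LinearMap.single S (fun _ : κ => T) j = 0 := by
      ext x; exact (q _).2
    rw [h2]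
    have h3 : (HT.mk (0 : T →ₗ[S] Z) : HT S T Z) = 0 := rfl
    rw [h3, map_zero]; rfl
  obtain ⟨ψ, hψ⟩ := factor_surj (postC k X p)
    (fun u => EV.lift (SES.of_surj p hp) (hX.ev hpk 0) u) ψ0 hker
  refine ⟨ψ, fun f g => ?_⟩
  obtain ⟨c, rfl⟩ := EV.lift (SES.of_surj p hp) (hT.fd.ev hpk 0) f
  rw [← h0, ← hψ]
  rfl

theorem Tilt.gt_fn1 (hT : Tilt Q T) (hX : Fd Q X) (l : Λ) :
    EV (Module.End S T)ᵐᵒᵖ (HT S T (Q.costd l)) (GT k S T X) 1 := by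
  obtain ⟨h, hh, hk⟩ := hT.cov l
  obtain ⟨ι, _, p, hp, hpk⟩ := hT.cover (fn_costd Q l)
  refine EV.of_extend (HT.ses (SES.of_surj p hp) (hT.fd.ev hpk 0)) (EV.proj 0) fun Φ => ?_
  obtain ⟨ψ, hψ⟩ := hT.theta hX hpk Φ
  have hi : Function.Injective (postC k X (LinearMap.ker p).subtype) := by
    intro a b hab
    ext x
    exact congrFun (LinearMap.congr_fun hab x) _
  obtain ⟨r, hr⟩ := LinearMap.exists_leftInverse_of_injective
    (postC k X (LinearMap.ker p).subtype) (by
      rw [eq_bot_iff]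
      intro x hx
      refine hi ?_
      rw [map_zero]
      exact hx)
  let Ψ : HT S T (ι → T) →ₗ[(Module.End S T)ᵐᵒᵖ] GT k S T X :=
    { toFun := fun f => GT.mk (ψ ∘ₗ r ∘ₗ postC k X f.hom)
      map_add' := fun f g => GT.ext fun h => by
        show ψ (r ((f.hom + g.hom) ∘ₗ h)) = ψ (r (f.hom ∘ₗ h)) + ψ (r (g.hom ∘ₗ h))
        rw [LinearMap.add_comp, map_add, map_add]
      map_smul' := fun a f => rfl }
  refine ⟨Ψ, LinearMap.ext fun f => GT.ext fun g => ?_⟩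
  have h1 := hψ f.hom g
  have h2 := LinearMap.congr_fun hr (f.hom ∘ₗ g)
  show ψ (r (postC k X (LinearMap.ker p).subtype (f.hom ∘ₗ g))) = _
  rw [show r (postC k X (LinearMap.ker p).subtype (f.hom ∘ₗ g)) = f.hom ∘ₗ g from h2]
  exact h1.symm

theorem Tilt.gt_hom (hT : Tilt Q T) {l m : Λ}
    (Φ : HT S T (Q.costd m) →ₗ[(Module.End S T)ᵐᵒᵖ] GT k S T (Q.std l)) (hΦ : Φ ≠ 0) : l = m := by
  by_contra hne
  apply hΦ
  letI : Module k (Q.costd m) := Module.compHom _ (algebraMap k S)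
  haveI : IsScalarTower k S (Q.costd m) := ⟨fun c s x => by
    rw [Algebra.smul_def, mul_smul]; rfl⟩
  obtain ⟨ψ, hψ⟩ := hT.theta (fd_std Q l) (fn_costd Q m) Φ
  refine LinearMap.ext fun f => GT.ext fun g => ?_
  refine (hψ (HT.hom f) g).trans ?_
  have h0 : (HT.hom f) ∘ₗ g = 0 := hom_std_costd Q hne _
  refine (congrArg ψ h0).trans ?_
  rw [map_zero]
  rfl

theorem sigma_comp {ι : Type} [Fintype ι] [DecidableEq ι] (j : X →ₗ[S] (ι → T))
    (σ : (X →ₗ[S] T) →+ ((ι → T) →ₗ[S] T))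
    (hσb : ∀ (b : Module.End S T) (u : X →ₗ[S] T), b ∘ₗ σ u = σ (b ∘ₗ u))
    (e : (ι → T) →ₗ[S] (ι → T)) (he : ∀ i, LinearMap.proj i ∘ₗ e = σ (LinearMap.proj i ∘ₗ j))
    (dc : (ι → T) →ₗ[S] T) : dc ∘ₗ e = σ (dc ∘ₗ j) := by
  have h1 : ∀ (Y : Type) [AddCommGroup Y] [Module S Y] (f : Y →ₗ[S] (ι → T)), dc ∘ₗ f =
      ∑ i, (dc ∘ₗ LinearMap.single S (fun _ : ι => T) i) ∘ₗ (LinearMap.proj i ∘ₗ f) := by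
    intro Y _ _ f
    conv_lhs => rw [← pi_sum f, lcomp_sum]
    rfl
  rw [h1 _ e, h1 _ j, map_sum]
  refine Finset.sum_congr rfl fun i _ => ?_
  rw [he i]
  exact hσb _ _

theorem retract_of_sigma {ι κ : Type} [Fintype ι] (j : X →ₗ[S] (ι → T))
    (hj : Function.Injective j) (d0 : ((ι → T) ⧸ LinearMap.range j) →ₗ[S] (κ → T))
    (hd0 : Function.Injective d0) (σ : (X →ₗ[S] T) →+ ((ι → T) →ₗ[S] T))
    (hσj : ∀ u : X →ₗ[S] T, σ u ∘ₗ j = u)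
    (hσb : ∀ (b : Module.End S T) (u : X →ₗ[S] T), b ∘ₗ σ u = σ (b ∘ₗ u)) :
    ∃ v : (ι → T) →ₗ[S] X, v ∘ₗ j = LinearMap.id := by
  classical
  obtain ⟨e, he⟩ : ∃ e : (ι → T) →ₗ[S] (ι → T), ∀ i, LinearMap.proj i ∘ₗ e =
      σ (LinearMap.proj i ∘ₗ j) := ⟨LinearMap.pi fun i => σ (LinearMap.proj i ∘ₗ j), fun i => rfl⟩
  have hej : e ∘ₗ j = j := by
    refine LinearMap.ext fun x => funext fun i => ?_
    have h1 := LinearMap.congr_fun (hσj (LinearMap.proj i ∘ₗ j)) x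
    rw [← he i] at h1
    exact h1
  have hde : d0 ∘ₗ (LinearMap.range j).mkQ ∘ₗ e = 0 := by
    refine LinearMap.ext fun x => funext fun c => ?_
    have h1 := sigma_comp j σ hσb e he (LinearMap.proj c ∘ₗ d0 ∘ₗ (LinearMap.range j).mkQ)
    have h2 : (LinearMap.proj c ∘ₗ d0 ∘ₗ (LinearMap.range j).mkQ) ∘ₗ j = 0 := by
      refine LinearMap.ext fun y => ?_
      show d0 ((LinearMap.range j).mkQ (j y)) c = 0
      have : (LinearMap.range j).mkQ (j y) = 0 := by
        rw [← LinearMap.mem_ker, Submodule.ker_mkQ]; exact ⟨y, rfl⟩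
      rw [this, map_zero]; rfl
    rw [h2, map_zero] at h1
    exact LinearMap.congr_fun h1 x
  obtain ⟨v, hv⟩ := factor_inj j hj e (fun x => by
    rw [← Submodule.ker_mkQ (LinearMap.range j), LinearMap.mem_ker]
    apply hd0
    rw [map_zero]
    exact LinearMap.congr_fun hde x)
  have hvj : v ∘ₗ j = LinearMap.id := by
    refine LinearMap.ext fun x => hj ?_
    have h1 := LinearMap.congr_fun hv (j x)
    have h2 := LinearMap.congr_fun hej x
    exact h1.trans h2
  exact ⟨v, hvj⟩

theorem Tilt.half1_base [Module.Finite k T] (hT : Tilt Q T) (hX : Fd Q X)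
    (h : ∀ (M : Type) [AddCommGroup M] [Module (Module.End S T)ᵐᵒᵖ M]
      [Module.Finite (Module.End S T)ᵐᵒᵖ M], EV (Module.End S T)ᵐᵒᵖ M (GT k S T X) 1) : Fn Q X := by
  classical
  have hXf := hX.1
  have hTf := hT.fn.1
  obtain ⟨ι, _, j, hj, hjk⟩ := hT.env hX
  obtain ⟨κ, _, d0, hd0, -⟩ := hT.env hjk
  have hs := GT.ses (k := k) (SES.of_inj j hj) (hjk.ev hT.fn 0)
  have := hjk.1
  have := GT.finite (k := k) (S := S) (T := T) (X := (ι → T) ⧸ LinearMap.range j)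
  obtain ⟨ρ, hρ⟩ := EV.extend hs (h _) LinearMap.id
  have hf1 := hom_fin (k := k) (S := S) (T := T) (X := ι → T)
  have hf2 := hom_fin (k := k) (S := S) (T := T) (X := X)
  let ρk : ((((ι → T) →ₗ[S] T) →ₗ[k] k)) →ₗ[k] ((X →ₗ[S] T) →ₗ[k] k) := ρ.restrictScalars k
  let σ : (X →ₗ[S] T) →ₗ[k] ((ι → T) →ₗ[S] T) :=
    (Module.evalEquiv k ((ι → T) →ₗ[S] T)).symm.toLinearMap ∘ₗ ρk.flip
  have hσ : ∀ (φ : GT k S T (ι → T)) (u : X →ₗ[S] T), φ.fn (σ u) = (ρ φ).fn u := by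
    intro φ u
    have h1 := (Module.evalEquiv k ((ι → T) →ₗ[S] T)).apply_symm_apply (ρk.flip u)
    exact LinearMap.congr_fun h1 φ
  have hsep : ∀ (V : Type) [AddCommGroup V] [Module k V] (x y : V),
      (∀ φ : V →ₗ[k] k, φ x = φ y) → x = y := by
    intro V _ _ x y hxy
    rw [← sub_eq_zero]
    refine (Module.forall_dual_apply_eq_zero_iff k _).1 fun φ => ?_
    rw [map_sub, hxy, sub_self]
  have hσj : ∀ u : X →ₗ[S] T, σ u ∘ₗ j = u := by
    intro u
    refine hsep _ _ _ fun θ => ?_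
    have h1 := hσ (GT.map k T j (GT.mk θ)) u
    rw [show ρ (GT.map k T j (GT.mk θ)) = GT.mk θ from LinearMap.congr_fun hρ (GT.mk θ)] at h1
    exact h1
  have hσb : ∀ (b : Module.End S T) (u : X →ₗ[S] T), b ∘ₗ σ u = σ (b ∘ₗ u) := by
    intro b u
    refine hsep _ _ _ fun φ => ?_
    have h1 := hσ (MulOpposite.op b • GT.mk φ) u
    rw [map_smul] at h1
    exact h1.trans (hσ (GT.mk φ) (b ∘ₗ u)).symm
  obtain ⟨v, hvj⟩ := retract_of_sigma j hj d0 hd0 σ.toAddMonoidHom hσj hσb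
  exact ⟨hX.1, fun l => EV.retract_right hvj (hT.fn.pi.2 l)⟩

theorem Tilt.half1 [Module.Finite k T] (hT : Tilt Q T) (n : ℕ) :
    ∀ (X : Type) [AddCommGroup X] [Module S X], Fd Q X → 
    ((∀ (M : Type) [AddCommGroup M] [Module (Module.End S T)ᵐᵒᵖ M]
      [Module.Finite (Module.End S T)ᵐᵒᵖ M], EV (Module.End S T)ᵐᵒᵖ M (GT k S T X) (n+1)) ↔
      ∀ l, EV S (Q.std l) X (n+1)) := by
  induction n with
  | zero =>
    intro X _ _ hX
    constructor
    · intro h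
      exact (hT.half1_base (k := k) hX h).2
    · intro h M _ _ _
      have hXd : Fn Q X := ⟨hX.1, h⟩
      obtain ⟨ι, _, j, hj, hjk⟩ := hT.env hX
      obtain ⟨s, hs⟩ := EV.extend (SES.of_inj j hj) (hjk.ev hXd 0) LinearMap.id
      refine EV.retract_right (i := GT.map k T j) (r := GT.map k T s) ?_ (GT.ev_pi 0)
      refine LinearMap.ext fun φ => GT.ext fun h => ?_
      show φ.fn ((h ∘ₗ s) ∘ₗ j) = φ.fn h
      rw [LinearMap.comp_assoc, hs]; rfl
  | succ n ih =>
    intro X _ _ hX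
    obtain ⟨ι, _, j, hj, hjk⟩ := hT.env hX
    have hs := SES.of_inj j hj
    have hs' := GT.ses (k := k) hs (hjk.ev hT.fn 0)
    constructor
    · intro h l
      refine EV.cov1 hs ((ih _ hjk).1 ?_ l) ((fd_std Q l).ev hT.fn.pi _)
      intro M _ _ _
      exact EV.cov3 hs' (GT.ev_pi n) (h M)
    · intro h M _ _ _
      refine EV.cov1 hs' ((ih _ hjk).2 ?_ M) (GT.ev_pi _)
      intro l
      exact EV.cov3 hs ((fd_std Q l).ev hT.fn.pi _) (h l)

theorem ringel_half1 [Module.Finite k T] [FDA (Module.End S T)ᵐᵒᵖ] (hT : Tilt Q T)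
    (Q' : QHData (Module.End S T)ᵐᵒᵖ Λᵒᵈ)
    (he : ∀ l : Λ, Nonempty (Q'.std (OrderDual.toDual l) ≃ₗ[(Module.End S T)ᵐᵒᵖ]
      HT S T (Q.costd l))) (n : ℕ) :
    gfdAlg S Q ≤ n ↔ wfdAlg (Module.End S T)ᵐᵒᵖ Q' ≤ n := by
  have hG : ∀ l, Fn Q' (GT k S T (Q.std l)) := fun l =>
    ⟨GT.finite, fun l' => by
      obtain ⟨e⟩ := he (OrderDual.ofDual l')
      exact (hT.gt_fn1 (fd_std Q l) _).congr_left e⟩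
  have hnt : ∀ l, Nontrivial (GT k S T (Q.std l)) := by
    intro l
    obtain ⟨ι, _, j, hj, -⟩ := hT.env (fd_std Q l)
    have := std_ne Q l
    obtain ⟨x, hx⟩ := exists_ne (0 : Q.std l)
    have h1 : j x ≠ 0 := fun h => hx (hj (by rw [h, map_zero]))
    obtain ⟨i, hi⟩ := Function.ne_iff.1 h1
    have : Nontrivial (Q.std l →ₗ[S] T) := ⟨LinearMap.proj i ∘ₗ j, 0, fun h =>
      hi (LinearMap.congr_fun h x)⟩
    exact inferInstanceAs (Nontrivial (Module.Dual k (Q.std l →ₗ[S] T)))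
  have htop : ∀ l : Λ, ∃ p : GT k S T (Q.std l) →ₗ[(Module.End S T)ᵐᵒᵖ]
      Q'.costd (OrderDual.toDual l), Function.Surjective p ∧ Fn Q' (LinearMap.ker p) := by
    intro l
    have := hnt l
    obtain ⟨m, p, hp, hpk⟩ := (hG l).top
    obtain ⟨t, ht, -⟩ := std_top Q' m
    obtain ⟨s, hs, -⟩ := costd_soc0 Q' m
    obtain ⟨w, hw⟩ := EV.lift (SES.of_surj p hp) (hpk.2 m) (s ∘ₗ t)
    obtain ⟨e⟩ := he (OrderDual.ofDual m)
    have hne : w ∘ₗ e.symm.toLinearMap ≠ 0 := by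
      intro h0
      obtain ⟨y, hy⟩ := exists_ne (0 : Q'.L m)
      obtain ⟨x, rfl⟩ := ht y
      apply hy
      apply hs
      have h1 := LinearMap.congr_fun hw x
      have h2 : w (e.symm (e x)) = 0 := LinearMap.congr_fun h0 (e x)
      have h3 : w x = 0 := (congrArg w (e.symm_apply_apply x)).symm.trans h2
      have h4 : p (w x) = s (t x) := h1
      rw [← h4, h3, map_zero, map_zero]
    have hlm := hT.gt_hom _ hne
    subst hlm
    exact ⟨p, hp, hpk⟩
  have h1 : gfdAlg S Q ≤ n ↔ ∀ (l : Λ) (m : ℕ), n ≤ m → 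
      ∀ (M : Type) [AddCommGroup M] [Module (Module.End S T)ᵐᵒᵖ M]
      [Module.Finite (Module.End S T)ᵐᵒᵖ M],
        EV (Module.End S T)ᵐᵒᵖ M (GT k S T (Q.std l)) (m+1) := by
    rw [gfdAlg_le_iff']
    constructor
    · intro h l m hm
      exact (hT.half1 m _ (fd_std Q l)).2 fun l' => h l' l m hm
    · intro h l l' m hm
      exact (hT.half1 m _ (fd_std Q l')).1 (h l' m hm) l
  rw [h1, wfdAlg_le_iff]
  constructor
  · intro h
    obtain ⟨b, hb⟩ := gldim_fin Q'
    have key : ∀ j m, n ≤ m → b ≤ m + j → ∀ (M : Type) [AddCommGroup M]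
        [Module (Module.End S T)ᵐᵒᵖ M] [Module.Finite (Module.End S T)ᵐᵒᵖ M] (l : Λᵒᵈ),
        EV (Module.End S T)ᵐᵒᵖ M (Q'.costd l) (m+1) := by
      intro j
      induction j with
      | zero => intro m _ hm M _ _ _ l; exact hb _ _ _ (by omega)
      | succ j ih =>
        intro m hm hj M _ _ _ l
        obtain ⟨p, hp, hpk⟩ := htop (OrderDual.ofDual l)
        exact EV.cov3 (SES.of_surj p hp) (h _ m hm M)
          (ev_filt_right hpk.filt fun l' => ih (m+1) (by omega) (by omega) M l')
    intro M _ _ _ l m hm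
    exact key b m hm (by omega) M l
  · intro h l m hm M _ _ _
    exact ev_filt_right (hG l).filt fun l' => h M l' m hm

end Half1

end QHProof


namespace QHProof

set_option linter.all false

open QHPaper

theorem main_aux {k S Λ T : Type} [Field k] [Ring S] [Algebra k S] [Module.Finite k S]
    [Fintype Λ] [PartialOrder Λ] {Q : QHData S Λ} [AddCommGroup T] [Module S T]
    [Module k T] [IsScalarTower k S T]
    (hn : Fn Q T) (hd : Fd Q T)
    (Q' : QHData (Module.End S T)ᵐᵒᵖ Λᵒᵈ)
    (he : ∀ l : Λ, Nonempty (Q'.std (OrderDual.toDual l) ≃ₗ[(Module.End S T)ᵐᵒᵖ]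
      HT S T (Q.costd l))) :
    gfdAlg S Q = wfdAlg (Module.End S T)ᵐᵒᵖ Q' ∧ wfdAlg S Q = gfdAlg (Module.End S T)ᵐᵒᵖ Q' := by
  haveI : FDA S := fda_of_finite k S
  haveI : Module.Finite S T := hn.1
  haveI : Module.Finite k T := Module.Finite.trans S T
  haveI : Module.Finite k (Module.End S T) := hom_fin (k := k) (S := S) (T := T) (X := T)
  haveI : Module.Finite k (Module.End S T)ᵐᵒᵖ :=
    Module.Finite.equiv (MulOpposite.opLinearEquiv k (M := Module.End S T))
  haveI : FDA (Module.End S T)ᵐᵒᵖ := fda_of_finite k _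
  have hT : Tilt Q T := tilt_of_ringel hn hd Q' he
  have key : ∀ a b : ℕ, (∀ n : ℕ, a ≤ n ↔ b ≤ n) → a = b := fun a b h =>
    le_antisymm ((h b).2 le_rfl) ((h a).1 le_rfl)
  exact ⟨key _ _ fun n => ringel_half1 (k := k) hT Q' he n, key _ _ fun n => ringel_half2 hT Q' he n⟩

end QHProof

open QHPaper in
/-- Let `S` be a quasi-hereditary algebra with Ringel dual `S'`. Then
`gfd(S) = wfd(S')` and `wfd(S) = gfd(S')`. -/
theorem stmt8 (k S Λ : Type) [Field k] [Ring S] [Algebra k S] [FiniteDimensional k S]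
    [Fintype Λ] [PartialOrder Λ]
    (QH : QHData S Λ) (T : ModuleCat.{0} S)
    (QH' : QHData (RingelDualRing S T) Λᵒᵈ)
    (hRD : IsRingelDualData S QH T QH') :
    gfdAlg S QH = wfdAlg (RingelDualRing S T) QH' ∧
    wfdAlg S QH = gfdAlg (RingelDualRing S T) QH' := by
  haveI : QHProof.FDA S := QHProof.fda_of_finite k S
  letI : Module k T := Module.compHom T (algebraMap k S)
  haveI : IsScalarTower k S T := ⟨fun c s x => by rw [Algebra.smul_def, mul_smul]; rfl⟩
  obtain ⟨⟨⟨hd, hn⟩, hfin, -⟩, he⟩ := hRD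
  refine QHProof.main_aux (k := k) (T := T) (QHProof.Fn.of_filt hn) (QHProof.Fd.of_filt hd) QH' ?_
  intro l
  obtain ⟨e⟩ := he l
  exact ⟨{ toFun := fun x => QHProof.HT.mk (e x)
           invFun := fun x => e.symm x.hom
           left_inv := fun x => e.symm_apply_apply x
           right_inv := fun x => e.apply_symm_apply x.hom
           map_add' := fun x y => e.map_add x y
           map_smul' := fun a x => e.map_smul a x }⟩
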